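/- There exists a jointly smooth function f₃ : ℝ × ℝ → ℂ², (x,λ) ↦ f₃(x,λ), such that: (i) for every λ ∈ ℝ, f₃(·,λ) is a solution of ℋf = (λ²+1)f; (ii) sup over all λ ∈ ℝ and x ∈ ℝ of |e^(μx) f₃(x,λ)| is finite (with bound depending only on V); and (iii) for all integers k, ℓ ≥ 0 there is a constant C_{k,ℓ} such that |∂_λ^ℓ ∂ₓ^k (e^(μx) f₃(x,λ) − (0,1))| ≤ C_{k,ℓ} μ^(−1−ℓ) e^(−γx) for all x ≥ 0 and all λ ∈ ℝ. -/

import Mathlib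

noncomputable section

open Real MeasureTheory

/-- The matrix Schrödinger operator `ℋ` acting on `f = (f₁, f₂) : ℝ → ℂ²`:
`ℋf = (−f₁'' + f₁ + V₁f₁ + V₂f₂, f₂'' − f₂ − V₂f₁ − V₁f₂)`. -/
def matH (V₁ V₂ : ℝ → ℝ) (f : ℝ → ℂ × ℂ) (x : ℝ) : ℂ × ℂ :=
  (-(iteratedDeriv 2 (fun y => (f y).1) x) + (f x).1
      + (V₁ x : ℂ) * (f x).1 + (V₂ x : ℂ) * (f x).2,
    iteratedDeriv 2 (fun y => (f y).2) x - (f x).2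
      - (V₂ x : ℂ) * (f x).1 - (V₁ x : ℂ) * (f x).2)

/-- `f` is a (classical, twice continuously differentiable) solution of `ℋf = z f`. -/
def IsSolution (V₁ V₂ : ℝ → ℝ) (z : ℂ) (f : ℝ → ℂ × ℂ) : Prop :=
  ContDiff ℝ 2 f ∧ ∀ x : ℝ, matH V₁ V₂ f x = z • f x

/-- The potentials `V₁, V₂` are smooth, even, and exponentially decaying with rate `γ ∈ (0,1)`,
together with all derivatives. -/
def PotentialHyp (γ : ℝ) (V₁ V₂ : ℝ → ℝ) : Prop :=
  0 < γ ∧ γ < 1 ∧ ContDiff ℝ (⊤ : ℕ∞) V₁ ∧ ContDiff ℝ (⊤ : ℕ∞) V₂ ∧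
    (∀ x, V₁ (-x) = V₁ x) ∧ (∀ x, V₂ (-x) = V₂ x) ∧
    ∀ k : ℕ, ∃ C : ℝ, ∀ x : ℝ,
      |iteratedDeriv k V₁ x| + |iteratedDeriv k V₂ x| ≤ C * Real.exp (-γ * |x|)

/-- `μ(λ) = √(λ² + 2)`. -/
def mu (lam : ℝ) : ℝ := Real.sqrt (lam ^ 2 + 2)


open Real MeasureTheory
set_option linter.unusedSectionVars false

lemma mu_ge_one (l : ℝ) : 1 ≤ mu l := by
  unfold mu; rw [Real.one_le_sqrt]; nlinarith [sq_nonneg l]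
lemma mu_pos (l : ℝ) : 0 < mu l := lt_of_lt_of_le one_pos (mu_ge_one l)
lemma mu_sq (l : ℝ) : mu l ^ 2 = l ^ 2 + 2 := by
  unfold mu; rw [Real.sq_sqrt]; positivity
lemma abs_le_mu (l : ℝ) : |l| ≤ mu l := by
  unfold mu; apply Real.abs_le_sqrt; linarith
lemma hasDerivAt_mu (l : ℝ) : HasDerivAt mu (l * (mu l) ^ (-1 : ℝ)) l := by
  have h : HasDerivAt (fun l : ℝ => l ^ 2 + 2) (2 * l) l := by
    simpa using (hasDerivAt_pow 2 l).add_const (2 : ℝ)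
  have := h.sqrt (by positivity)
  refine this.congr_deriv (Eq.symm ?_)
  rw [Real.rpow_neg_one]
  change l * (Real.sqrt (l ^ 2 + 2))⁻¹ = _
  have : Real.sqrt (l ^ 2 + 2) ≠ 0 := (mu_pos l).ne'
  field_simp

/-! ### Scalar symbol class in `lam`, uniform in an auxiliary parameter -/

section Q
variable {Z : Type*} [TopologicalSpace Z]

def QB (m : ℝ) (f : Z → ℝ → ℝ) : Prop :=
  (∀ l, Continuous fun z => f z l) ∧ ∃ C, 0 ≤ C ∧ ∀ z l, |f z l| ≤ C * mu l ^ m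

def QP : ℕ → ℝ → (Z → ℝ → ℝ) → Prop
  | 0, m, f => QB m f
  | n + 1, m, f => QB m f ∧ ∃ f' : Z → ℝ → ℝ,
      (∀ z l, HasDerivAt (f z) (f' z l) l) ∧ QP n (m - 1) f'

lemma QP.b {n : ℕ} {m : ℝ} {f : Z → ℝ → ℝ} (h : QP n m f) : QB m f := by
  cases n with
  | zero => exact h
  | succ n => exact h.1

lemma QB.add {m : ℝ} {f g : Z → ℝ → ℝ} (hf : QB m f) (hg : QB m g) :
    QB m (fun z l => f z l + g z l) := by
  obtain ⟨hf, C, hC, h⟩ := hf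
  obtain ⟨hg, D, hD, h'⟩ := hg
  refine ⟨fun l => (hf l).add (hg l), C + D, by positivity, fun z l => ?_⟩
  calc |f z l + g z l| ≤ |f z l| + |g z l| := abs_add_le _ _
    _ ≤ (C + D) * mu l ^ m := by rw [add_mul]; exact add_le_add (h z l) (h' z l)

lemma QB.mul {m k : ℝ} {f g : Z → ℝ → ℝ} (hf : QB m f) (hg : QB k g) :
    QB (m + k) (fun z l => f z l * g z l) := by
  obtain ⟨hf, C, hC, h⟩ := hf
  obtain ⟨hg, D, hD, h'⟩ := hg
  refine ⟨fun l => (hf l).mul (hg l), C * D, by positivity, fun z l => ?_⟩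
  rw [abs_mul, Real.rpow_add (mu_pos l)]
  calc _ ≤ (C * mu l ^ m) * (D * mu l ^ k) :=
        mul_le_mul (h z l) (h' z l) (abs_nonneg _) ((abs_nonneg _).trans (h z l))
    _ = _ := by ring

lemma QP.mono {n : ℕ} {m : ℝ} {f : Z → ℝ → ℝ} (h : QP (n + 1) m f) : QP n m f := by
  induction n generalizing m f with
  | zero => exact h.1
  | succ n ih =>
    obtain ⟨hb, f', hd, h'⟩ := h
    exact ⟨hb, f', hd, ih h'⟩

lemma QP.add {n : ℕ} {m : ℝ} {f g : Z → ℝ → ℝ} (hf : QP n m f) (hg : QP n m g) :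
    QP n m (fun z l => f z l + g z l) := by
  induction n generalizing m f g with
  | zero => exact QB.add hf hg
  | succ n ih =>
    obtain ⟨hb, f', hd, h'⟩ := hf
    obtain ⟨hb1, g', hd1, h1'⟩ := hg
    exact ⟨hb.add hb1, _, fun z l => (hd z l).add (hd1 z l), ih h' h1'⟩

lemma QP.mul {n : ℕ} {m k : ℝ} {f g : Z → ℝ → ℝ} (hf : QP n m f) (hg : QP n k g) :
    QP n (m + k) (fun z l => f z l * g z l) := by
  induction n generalizing m k f g with
  | zero => exact QB.mul hf hg
  | succ n ih =>
    have hf0 := hf.mono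
    have hg0 := hg.mono
    obtain ⟨hb, f', hd, h'⟩ := hf
    obtain ⟨hb1, g', hd1, h1'⟩ := hg
    refine ⟨hb.mul hb1, _, fun z l => (hd z l).mul (hd1 z l), ?_⟩
    have e1 := ih h' hg0
    have e2 := ih hf0 h1'
    rw [show m - 1 + k = m + k - 1 by ring] at e1
    rw [show m + (k - 1) = m + k - 1 by ring] at e2
    exact e1.add e2

lemma QP.zero (n : ℕ) (m : ℝ) : QP n m (fun (_ : Z) (_ : ℝ) => (0 : ℝ)) := by
  induction n generalizing m with
  | zero => exact ⟨fun l => continuous_const, 0, le_rfl, by simp⟩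
  | succ n ih => exact ⟨⟨fun l => continuous_const, 0, le_rfl, by simp⟩, _,
      fun z l => hasDerivAt_const _ _, ih _⟩

lemma QP.const (n : ℕ) (c : ℝ) : QP n 0 (fun (_ : Z) (_ : ℝ) => c) := by
  have : QB 0 (fun (_ : Z) (_ : ℝ) => c) :=
    ⟨fun l => continuous_const, |c|, abs_nonneg _, by simp⟩
  cases n with
  | zero => exact this
  | succ n => exact ⟨this, _, fun z l => hasDerivAt_const _ _, QP.zero _ _⟩

lemma QP.id (n : ℕ) : QP n 1 (fun (_ : Z) (l : ℝ) => l) := by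
  have : QB 1 (fun (_ : Z) (l : ℝ) => l) :=
    ⟨fun l => continuous_const, 1, zero_le_one, by simpa using fun _ => abs_le_mu⟩
  cases n with
  | zero => exact this
  | succ n =>
    refine ⟨this, _, fun z l => hasDerivAt_id _, ?_⟩
    rw [sub_self]
    exact QP.const n 1

lemma QP.mu_rpow (n : ℕ) (m : ℝ) : QP n m (fun (_ : Z) (l : ℝ) => mu l ^ m) := by
  have : ∀ m, QB m (fun (_ : Z) (l : ℝ) => mu l ^ m) := fun m =>
    ⟨fun l => continuous_const, 1, zero_le_one, fun z l => by
      rw [abs_of_nonneg (Real.rpow_nonneg (mu_pos l).le _), one_mul]⟩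
  induction n generalizing m with
  | zero => exact this m
  | succ n ih =>
    refine ⟨this m, _, fun z l => (hasDerivAt_mu l).rpow_const (Or.inl (mu_pos l).ne'), ?_⟩
    have := (((QP.id (Z := Z) n).mul (ih (-1))).mul (QP.const n m)).mul (ih (m - 1))
    rwa [show (1 : ℝ) + -1 + 0 + (m - 1) = m - 1 by ring] at this

/-- Extract the family of derivatives. -/
lemma QP.family {m : ℝ} {f : Z → ℝ → ℝ} (h : ∀ n, QP n m f) (j : ℕ) :
    (∀ l, Continuous fun z => iteratedDeriv j (f z) l) ∧
    (∃ C, 0 ≤ C ∧ ∀ z l, |iteratedDeriv j (f z) l| ≤ C * mu l ^ (m - j)) ∧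
    (∀ z l, HasDerivAt (iteratedDeriv j (f z)) (iteratedDeriv (j + 1) (f z) l) l) := by
  induction j generalizing m f with
  | zero =>
    have hb := (h 0).b
    refine ⟨by simpa using hb.1, by simpa using hb.2, fun z l => ?_⟩
    obtain ⟨-, f', hd, -⟩ := h 1
    simpa [iteratedDeriv_succ] using (hd z l).differentiableAt.hasDerivAt
  | succ j ih =>
    have : ∀ n, QP n (m - 1) (fun z => deriv (f z)) := by
      intro n
      obtain ⟨-, f', hd, h'⟩ := h (n + 1)
      have : (fun z => deriv (f z)) = f' := by
        ext z l; exact (hd z l).deriv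
      rwa [this]
    have := ih this
    simp only [← iteratedDeriv_succ'] at this
    refine ⟨this.1, ?_, this.2.2⟩
    rw [show m - ((j + 1 : ℕ) : ℝ) = m - 1 - j by push_cast; ring]
    exact this.2.1

end Q

/-! ### Vector valued symbol class in `(s, lam)` -/
section P
variable {F : Type*} [NormedAddCommGroup F] [NormedSpace ℝ F]
variable {G : Type*} [NormedAddCommGroup G] [NormedSpace ℝ G]

def pd (a b : F) : ℝ × ℝ →L[ℝ] F :=
  (ContinuousLinearMap.fst ℝ ℝ ℝ).smulRight a + (ContinuousLinearMap.snd ℝ ℝ ℝ).smulRight b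

lemma pd_apply (a b : F) (v : ℝ × ℝ) : pd a b v = v.1 • a + v.2 • b := by simp [pd]

def SB (m w : ℝ) (f : ℝ × ℝ → F) : Prop :=
  ∃ C, 0 ≤ C ∧ ∀ s l, 0 ≤ s → ‖f (s, l)‖ ≤ C * mu l ^ m * exp (-w * s)

def SP : ℕ → ℝ → ℝ → (ℝ × ℝ → F) → Prop
  | 0, m, w, f => SB m w f
  | n + 1, m, w, f => SB m w f ∧ ∃ fs fl : ℝ × ℝ → F,
      (∀ p, HasFDerivAt f (pd (fs p) (fl p)) p) ∧ SP n m w fs ∧ SP n (m - 1) w fl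

lemma SP.b {n : ℕ} {m w : ℝ} {f : ℝ × ℝ → F} (h : SP n m w f) : SB m w f := by
  cases n with
  | zero => exact h
  | succ n => exact h.1

lemma SB.add {m w : ℝ} {f g : ℝ × ℝ → F} (hf : SB m w f) (hg : SB m w g) :
    SB m w (fun p => f p + g p) := by
  obtain ⟨C, hC, h⟩ := hf
  obtain ⟨D, hD, h'⟩ := hg
  refine ⟨C + D, by positivity, fun s l hs => ?_⟩
  calc _ ≤ _ := norm_add_le _ _
    _ ≤ _ := by rw [add_mul, add_mul]; exact add_le_add (h s l hs) (h' s l hs)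

lemma SB.clm {m w : ℝ} {f : ℝ × ℝ → F} (hf : SB m w f) (L : F →L[ℝ] G) :
    SB m w (fun p => L (f p)) := by
  obtain ⟨C, hC, h⟩ := hf
  refine ⟨‖L‖ * C, by positivity, fun s l hs => ?_⟩
  calc _ ≤ _ := L.le_opNorm _
    _ ≤ ‖L‖ * (C * mu l ^ m * exp (-w * s)) := by gcongr; exact h s l hs
    _ = _ := by ring

lemma SB.weak {m w m' w' : ℝ} {f : ℝ × ℝ → F} (hf : SB m w f) (hm : m ≤ m') (hw : w' ≤ w) :
    SB m' w' f := by
  obtain ⟨C, hC, h⟩ := hf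
  refine ⟨C, hC, fun s l hs => (h s l hs).trans ?_⟩
  have := mu_pos l
  have : -w * s ≤ -w' * s := by nlinarith
  gcongr
  exact mu_ge_one l

lemma SP.mono {n : ℕ} {m w : ℝ} {f : ℝ × ℝ → F} (h : SP (n + 1) m w f) : SP n m w f := by
  induction n generalizing m f with
  | zero => exact h.1
  | succ n ih =>
    obtain ⟨hb, fs, fl, hd, h1, h2⟩ := h
    exact ⟨hb, fs, fl, hd, ih h1, ih h2⟩

lemma SP.weak {n : ℕ} {m w m' w' : ℝ} {f : ℝ × ℝ → F} (h : SP n m w f) (hm : m ≤ m')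
    (hw : w' ≤ w) : SP n m' w' f := by
  induction n generalizing m m' f with
  | zero => exact SB.weak h hm hw
  | succ n ih =>
    obtain ⟨hb, fs, fl, hd, h1, h2⟩ := h
    exact ⟨hb.weak hm hw, fs, fl, hd, ih h1 hm, ih h2 (by linarith)⟩

lemma SP.add {n : ℕ} {m w : ℝ} {f g : ℝ × ℝ → F} (hf : SP n m w f) (hg : SP n m w g) :
    SP n m w (fun p => f p + g p) := by
  induction n generalizing m f g with
  | zero => exact SB.add hf hg
  | succ n ih =>
    obtain ⟨hb, fs, fl, hd, h1, h2⟩ := hf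
    obtain ⟨kb, gs, gl, kd, k1, k2⟩ := hg
    refine ⟨hb.add kb, fun p => fs p + gs p, fun p => fl p + gl p, fun p => ?_, ih h1 k1, ih h2 k2⟩
    refine ((hd p).add (kd p)).congr_fderiv ?_
    ext <;> simp [pd_apply]

lemma SP.clm {n : ℕ} {m w : ℝ} {f : ℝ × ℝ → F} (hf : SP n m w f) (L : F →L[ℝ] G) :
    SP n m w (fun p => L (f p)) := by
  induction n generalizing m f with
  | zero => exact SB.clm hf L
  | succ n ih =>
    obtain ⟨hb, fs, fl, hd, h1, h2⟩ := hf
    refine ⟨hb.clm L, fun p => L (fs p), fun p => L (fl p), fun p => ?_, ih h1, ih h2⟩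
    refine (L.hasFDerivAt.comp p (hd p)).congr_fderiv ?_
    ext <;> simp [pd_apply]

lemma SP.contDiff {f : ℝ × ℝ → F} {m w : ℝ} (n : ℕ) (h : SP (n + 1) m w f) :
    ContDiff ℝ n f := by
  induction n generalizing m f with
  | zero =>
    obtain ⟨hb, fs, fl, hd, h1, h2⟩ := h
    rw [Nat.cast_zero, contDiff_zero, continuous_iff_continuousAt]
    exact fun p => (hd p).continuousAt
  | succ n ih =>
    obtain ⟨hb, fs, fl, hd, h1, h2⟩ := h
    have : ((n + 1 : ℕ) : WithTop ℕ∞) = (n : WithTop ℕ∞) + 1 := by norm_cast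
    rw [this, contDiff_succ_iff_hasFDerivAt]
    refine ⟨fun p => pd (fs p) (fl p), ?_, hd⟩
    unfold pd
    have := ih h1
    have := ih h2
    fun_prop

lemma SP.contDiff_top {f : ℝ × ℝ → F} {m w : ℝ} (h : ∀ n, SP n m w f) :
    ContDiff ℝ (⊤ : ℕ∞) f := by
  rw [contDiff_infty]
  exact fun n => SP.contDiff n (h (n + 1))

lemma SP.ds {f : ℝ × ℝ → F} {m w : ℝ} (h : ∀ n, SP n m w f) :
    ∀ n, SP n m w (fun p => deriv (fun y => f (y, p.2)) p.1) := by
  intro n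
  obtain ⟨hb, fs, fl, hd, h1, h2⟩ := h (n + 1)
  have : (fun p : ℝ × ℝ => deriv (fun y => f (y, p.2)) p.1) = fs := by
    ext p
    have e : HasDerivAt (fun y : ℝ => (y, p.2)) ((1 : ℝ), (0 : ℝ)) p.1 :=
      (hasDerivAt_id _).prodMk (hasDerivAt_const _ _)
    have := (hd p).comp_hasDerivAt p.1 e
    simpa [pd_apply, Function.comp_def] using this.deriv
  rwa [this]

lemma SP.dl {f : ℝ × ℝ → F} {m w : ℝ} (h : ∀ n, SP n m w f) :
    ∀ n, SP n (m - 1) w (fun p => deriv (fun y => f (p.1, y)) p.2) := by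
  intro n
  obtain ⟨hb, fs, fl, hd, h1, h2⟩ := h (n + 1)
  have : (fun p : ℝ × ℝ => deriv (fun y => f (p.1, y)) p.2) = fl := by
    ext p
    have e : HasDerivAt (fun y : ℝ => (p.1, y)) ((0 : ℝ), (1 : ℝ)) p.2 :=
      (hasDerivAt_const _ _).prodMk (hasDerivAt_id _)
    have := (hd p).comp_hasDerivAt p.2 e
    simpa [pd_apply, Function.comp_def] using this.deriv
  rwa [this]

lemma SP.ids {f : ℝ × ℝ → F} {m w : ℝ} (h : ∀ n, SP n m w f) (k : ℕ) :
    ∀ n, SP n m w (fun p => iteratedDeriv k (fun y => f (y, p.2)) p.1) := by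
  induction k generalizing f with
  | zero => simpa using h
  | succ k ih =>
    have := ih (SP.ds h)
    simp only [iteratedDeriv_succ']
    exact this

lemma SP.idl {f : ℝ × ℝ → F} {m w : ℝ} (h : ∀ n, SP n m w f) (k : ℕ) :
    ∀ n, SP n (m - k) w (fun p => iteratedDeriv k (fun y => f (p.1, y)) p.2) := by
  induction k generalizing f m with
  | zero => simpa using h
  | succ k ih =>
    have := ih (SP.dl h)
    simp only [iteratedDeriv_succ']
    rw [show m - ((k + 1 : ℕ) : ℝ) = m - 1 - k by push_cast; ring]
    exact this

lemma SP.final {f : ℝ × ℝ → F} {m w : ℝ} (h : ∀ n, SP n m w f) (k l : ℕ) :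
    ∃ C : ℝ, ∀ lam : ℝ, ∀ x : ℝ, 0 ≤ x →
        ‖iteratedDeriv l (fun m => iteratedDeriv k (fun y => f (y, m)) x) lam‖
          ≤ C * mu lam ^ (m - l) * Real.exp (-w * x) := by
  obtain ⟨C, -, hC⟩ := SP.idl (SP.ids h k) l 0
  exact ⟨C, fun lam x hx => hC x lam hx⟩

end P

section A
variable {R : Type*} [NormedRing R] [NormedAlgebra ℝ R]

lemma SB.mul {m w m' w' : ℝ} {f g : ℝ × ℝ → R} (hf : SB m w f) (hg : SB m' w' g) :
    SB (m + m') (w + w') (fun p => f p * g p) := by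
  obtain ⟨C, hC, h⟩ := hf
  obtain ⟨D, hD, h'⟩ := hg
  refine ⟨C * D, by positivity, fun s l hs => ?_⟩
  rw [Real.rpow_add (mu_pos l), show -(w + w') * s = -w * s + -w' * s by ring, Real.exp_add]
  calc _ ≤ _ := norm_mul_le _ _
    _ ≤ (C * mu l ^ m * exp (-w * s)) * (D * mu l ^ m' * exp (-w' * s)) :=
        mul_le_mul (h s l hs) (h' s l hs) (norm_nonneg _) ((norm_nonneg _).trans (h s l hs))
    _ = _ := by ring

lemma SP.mul {n : ℕ} {m w m' w' : ℝ} {f g : ℝ × ℝ → R} (hf : SP n m w f) (hg : SP n m' w' g) :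
    SP n (m + m') (w + w') (fun p => f p * g p) := by
  induction n generalizing m m' f g with
  | zero => exact SB.mul hf hg
  | succ n ih =>
    have hf0 := hf.mono
    have hg0 := hg.mono
    obtain ⟨hb, fs, fl, hd, h1, h2⟩ := hf
    obtain ⟨kb, gs, gl, kd, k1, k2⟩ := hg
    refine ⟨hb.mul kb, fun p => fs p * g p + f p * gs p, fun p => fl p * g p + f p * gl p,
      fun p => ?_, (ih h1 hg0).add (ih hf0 k1), ?_⟩
    · refine ((hd p).mul' (kd p)).congr_fderiv ?_
      ext <;> simp [pd_apply, add_comm]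
    · have e1 := ih h2 hg0
      have e2 := ih hf0 k2
      rw [show m - 1 + m' = m + m' - 1 by ring] at e1
      rw [show m + (m' - 1) = m + m' - 1 by ring] at e2
      exact e1.add e2

lemma SP.inverse [HasSummableGeomSeries R] {T : ℝ × ℝ → R} (hT : ∀ n, SP n 0 0 T)
    (hu : ∀ p, IsUnit (1 - T p)) (hB : ∃ C, ∀ p, ‖Ring.inverse (1 - T p)‖ ≤ C) (n : ℕ) :
    SP n 0 0 (fun p => Ring.inverse (1 - T p)) := by
  have hb : SB 0 0 (fun p => Ring.inverse (1 - T p)) := by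
    obtain ⟨C, hC⟩ := hB
    exact ⟨C, (norm_nonneg _).trans (hC 0), fun s l _ => by simpa using hC (s, l)⟩
  induction n with
  | zero => exact hb
  | succ n ih =>
    obtain ⟨kb, gs, gl, kd, k1, k2⟩ := hT (n + 1)
    refine ⟨hb, fun p => Ring.inverse (1 - T p) * gs p * Ring.inverse (1 - T p),
      fun p => Ring.inverse (1 - T p) * gl p * Ring.inverse (1 - T p), fun p => ?_, ?_, ?_⟩
    · obtain ⟨u, hu⟩ := hu p
      have h1 : HasFDerivAt (fun p => 1 - T p) (-(pd (gs p) (gl p))) p := (kd p).const_sub 1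
      have h2 := hasFDerivAt_ringInverse (𝕜 := ℝ) u
      rw [hu] at h2
      have h3 := h2.comp p h1
      refine h3.congr_fderiv ?_
      have hi : Ring.inverse (1 - T p) = ↑u⁻¹ := by rw [← hu, Ring.inverse_unit]
      simp only [hi]
      ext <;> simp [pd_apply]
    · simpa using (ih.mul k1).mul ih
    · simpa using (ih.mul k2).mul ih

end A

open Real MeasureTheory

/-! ### Kernels -/

def cj (j : ℕ) (x : ℝ) : ℝ := ∫ u in (0:ℝ)..1, u ^ j * cos (x * u + j * (π / 2))

lemma cj_hasDerivAt (j : ℕ) (x : ℝ) : HasDerivAt (cj j) (cj (j + 1) x) x := by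
  have := intervalIntegral.hasDerivAt_integral_of_dominated_loc_of_deriv_le (μ := volume)
    (a := 0) (b := 1) (x₀ := x) (bound := fun _ => (1 : ℝ)) (s := Set.univ)
    (F := fun x u : ℝ => u ^ j * cos (x * u + j * (π / 2)))
    (F' := fun x u : ℝ => u ^ (j + 1) * cos (x * u + ((j + 1 : ℕ) : ℝ) * (π / 2)))
    Filter.univ_mem
    (Filter.Eventually.of_forall fun x => Continuous.aestronglyMeasurable (by fun_prop))
    (Continuous.intervalIntegrable (by fun_prop) _ _)
    (Continuous.aestronglyMeasurable (by fun_prop))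
    (Filter.Eventually.of_forall fun u hu x _ => by
      rw [Set.uIoc_of_le zero_le_one] at hu
      rw [norm_mul, norm_pow, Real.norm_eq_abs, Real.norm_eq_abs, abs_of_pos hu.1]
      exact mul_le_one₀ (pow_le_one₀ hu.1.le hu.2) (abs_nonneg _) (abs_cos_le_one _))
    (by simp)
    (Filter.Eventually.of_forall fun u hu x _ => by
      have h : HasDerivAt (fun x : ℝ => x * u + j * (π / 2)) u x := by
        simpa using ((hasDerivAt_id x).mul_const u).add_const ((j : ℝ) * (π / 2))
      refine (h.cos.const_mul (u ^ j)).congr_deriv ?_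
      rw [show x * u + ((j + 1 : ℕ) : ℝ) * (π / 2) = (x * u + j * (π / 2)) + π / 2 by
        push_cast; ring, cos_add_pi_div_two]
      ring)
  exact this.2

lemma cj_continuous (j : ℕ) : Continuous (cj j) :=
  continuous_iff_continuousAt.2 fun x => (cj_hasDerivAt j x).continuousAt

lemma cj_le (j : ℕ) (x : ℝ) : |cj j x| ≤ 1 := by
  have := intervalIntegral.norm_integral_le_of_norm_le_const (a := 0) (b := 1) (C := 1)
    (f := fun u : ℝ => u ^ j * cos (x * u + j * (π / 2))) (fun u hu => by
      rw [Set.uIoc_of_le zero_le_one] at hu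
      rw [norm_mul, norm_pow, Real.norm_eq_abs, Real.norm_eq_abs, abs_of_pos hu.1]
      exact mul_le_one₀ (pow_le_one₀ hu.1.le hu.2) (abs_nonneg _) (abs_cos_le_one _))
  simpa [cj] using this

lemma cj_zero (x : ℝ) : x * cj 0 x = sin x := by
  unfold cj
  simp only [pow_zero, one_mul, Nat.cast_zero, zero_mul, add_zero]
  by_cases hx : x = 0
  · simp [hx]
  · rw [intervalIntegral.integral_comp_mul_left (fun y => cos y) hx]
    simp [hx]

lemma cj_zero_zero : cj 0 0 = 1 := by simp [cj]

lemma pow_mul_exp_le (a : ℕ) {c t m : ℝ} (hc : 0 < c) (ht : 0 ≤ t) (hm : 0 < m) :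
    t ^ a * exp (-(c * m * t)) ≤ (a.factorial / c ^ a) * m ^ (-(a : ℝ)) := by
  have h := Real.pow_div_factorial_le_exp (c * m * t) (by positivity) a
  rw [Real.rpow_neg hm.le, Real.rpow_natCast, Real.exp_neg]
  have h1 : 0 < exp (c * m * t) := exp_pos _
  rw [div_le_iff₀ (by positivity)] at h
  rw [← div_eq_mul_inv, ← div_eq_mul_inv, div_div, div_le_div_iff₀ h1 (by positivity)]
  calc t ^ a * (c ^ a * m ^ a) = (c * m * t) ^ a := by rw [mul_pow, mul_pow]; ring
    _ ≤ _ := h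
    _ = _ := by ring

lemma QP.psi {c : ℝ} (hc : 0 < c) (q : ℕ → ℝ → ℝ) (hq : ∀ j x, HasDerivAt (q j) (q (j + 1) x) x)
    (hq1 : ∀ j x, |q j x| ≤ 1) (n : ℕ) (a j : ℕ) :
    QP n (-(a : ℝ)) (fun z l : ℝ => |z| ^ a * exp (-(c * mu l * |z|)) * q j (|z| * l)) := by
  have hb : ∀ a j : ℕ, QB (-(a : ℝ))
      (fun z l : ℝ => |z| ^ a * exp (-(c * mu l * |z|)) * q j (|z| * l)) := by
    intro a j
    have hcont : Continuous (q j) :=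
      continuous_iff_continuousAt.2 fun x => (hq j x).continuousAt
    refine ⟨fun l => by fun_prop, a.factorial / c ^ a, by positivity, fun z l => ?_⟩
    rw [abs_mul, abs_of_nonneg (by positivity)]
    calc _ ≤ |z| ^ a * exp (-(c * mu l * |z|)) * 1 := by gcongr; exact hq1 _ _
      _ ≤ _ := by rw [mul_one]; exact pow_mul_exp_le a hc (abs_nonneg z) (mu_pos l)
  induction n generalizing a j with
  | zero => exact hb a j
  | succ n ih =>
    refine ⟨hb a j, fun z l => (-c * (l * mu l ^ (-1 : ℝ))) *
        (|z| ^ (a + 1) * exp (-(c * mu l * |z|)) * q j (|z| * l)) +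
      |z| ^ (a + 1) * exp (-(c * mu l * |z|)) * q (j + 1) (|z| * l), fun z l => ?_, ?_⟩
    · have h1 : HasDerivAt (fun l => -(c * mu l * |z|)) (-(c * (l * mu l ^ (-1 : ℝ)) * |z|)) l :=
        (((hasDerivAt_mu l).const_mul c).mul_const _).neg
      have h2 : HasDerivAt (fun l => q j (|z| * l)) (q (j + 1) (|z| * l) * |z|) l := by
        have : HasDerivAt (fun l => |z| * l) |z| l := by
          simpa using (hasDerivAt_id l).const_mul |z|
        exact (hq j _).comp l this
      refine ((h1.exp.const_mul (|z| ^ a)).mul h2).congr_deriv ?_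
      ring
    · have e := ((QP.const (Z := ℝ) n (-c)).mul ((QP.id n).mul (QP.mu_rpow n (-1)))).mul
        (ih (a + 1) j)
      have e2 := ih (a + 1) (j + 1)
      rw [show (0 : ℝ) + (1 + -1) + -((a + 1 : ℕ) : ℝ) = -(a : ℝ) - 1 by push_cast; ring] at e
      rw [show -((a + 1 : ℕ) : ℝ) = -(a : ℝ) - 1 by push_cast; ring] at e2
      exact e.add e2

def K1 (z l : ℝ) : ℝ := |z| ^ 1 * exp (-(1 * mu l * |z|)) * cj 0 (|z| * l)

def K2 (z l : ℝ) : ℝ := (2⁻¹ * mu l ^ (-1 : ℝ)) *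
  (1 + (-1) * (|z| ^ 0 * exp (-(2 * mu l * |z|)) * 1))

lemma K1_QP (n : ℕ) : QP n (-1) K1 := by
  have := QP.psi one_pos cj cj_hasDerivAt cj_le n 1 0
  rw [Nat.cast_one] at this
  exact this

lemma K2_QP (n : ℕ) : QP n (-1) K2 := by
  have h := QP.psi two_pos (fun j _ => if j = 0 then (1 : ℝ) else 0)
    (fun j x => by simpa using hasDerivAt_const _ _)
    (fun j x => by split_ifs <;> simp) n 0 0
  have h0 := (QP.const (Z := ℝ) n (-1)).mul h
  rw [show (0 : ℝ) + -((0 : ℕ) : ℝ) = 0 by simp] at h0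
  have h1 := ((QP.const n (2⁻¹ : ℝ)).mul (QP.mu_rpow n (-1))).mul ((QP.const n 1).add h0)
  rw [show (0 : ℝ) + -1 + 0 = -1 by norm_num] at h1
  exact h1

lemma K2_eq {t : ℝ} (ht : 0 ≤ t) (l : ℝ) :
    K2 t l = exp (-(mu l * t)) * (sinh (mu l * t) / mu l) := by
  unfold K2
  have := mu_pos l
  rw [abs_of_nonneg ht, Real.rpow_neg_one, Real.sinh_eq,
    show -(2 * mu l * t) = -(mu l * t) + -(mu l * t) by ring, Real.exp_add]
  have h : exp (-(mu l * t)) * exp (mu l * t) = 1 := by rw [← Real.exp_add]; simp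
  field_simp
  simp only [mul_add, mul_sub, h]
  ring

def Sn (l t : ℝ) : ℝ := t * cj 0 (t * l)

lemma K1_eq {t : ℝ} (ht : 0 ≤ t) (l : ℝ) : K1 t l = exp (-(mu l * t)) * Sn l t := by
  unfold K1 Sn
  rw [abs_of_nonneg ht]; ring_nf

lemma Sn_zero (t : ℝ) : Sn 0 t = t := by simp [Sn, cj_zero_zero]
lemma Sn_ne {l : ℝ} (hl : l ≠ 0) (t : ℝ) : Sn l t = sin (l * t) / l := by
  unfold Sn
  rw [eq_div_iff hl, mul_comm l t, ← cj_zero]; ring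

lemma Sn_sub (l x y : ℝ) : Sn l (y - x) = cos (l * x) * Sn l y - Sn l x * cos (l * y) := by
  by_cases hl : l = 0
  · subst hl; simp [Sn_zero]
  · rw [Sn_ne hl, Sn_ne hl, Sn_ne hl, mul_sub, sin_sub]; field_simp

lemma Sn_hasDerivAt (l x : ℝ) : HasDerivAt (Sn l) (cos (l * x)) x := by
  by_cases hl : l = 0
  · subst hl
    have : Sn 0 = id := funext Sn_zero
    rw [this]; simpa using hasDerivAt_id x
  · have : Sn l = fun t => sin (l * t) / l := funext (Sn_ne hl)
    rw [this]
    have h : HasDerivAt (fun t => l * t) l x := by simpa using (hasDerivAt_id x).const_mul l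
    refine (h.sin.div_const l).congr_deriv ?_
    field_simp

lemma l_mul_Sn (l x : ℝ) : l * Sn l x = sin (l * x) := by
  unfold Sn; rw [mul_comm l x, ← cj_zero]; ring

lemma Sn_le (l x : ℝ) : |Sn l x| ≤ |x| := by
  unfold Sn; rw [abs_mul]
  exact mul_le_of_le_one_right (abs_nonneg _) (cj_le _ _)

open Real MeasureTheory
open scoped BoundedContinuousFunction

/-! ### Families with values in bounded continuous functions -/

section BC
variable {Z : Type*} [TopologicalSpace Z]

open Classical in
def mkB (f : Z → ℝ) : Z →ᵇ ℝ :=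
  if h : Continuous f ∧ ∃ M, ∀ z, ‖f z‖ ≤ M then
    BoundedContinuousFunction.ofNormedAddCommGroup f h.1 h.2.choose h.2.choose_spec else 0

lemma mkB_apply {f : Z → ℝ} (h : Continuous f) (h' : ∃ M, ∀ z, |f z| ≤ M) (z : Z) :
    mkB f z = f z := by
  unfold mkB
  rw [dif_pos ⟨h, h'⟩]
  rfl

lemma taylor_bound {f0 f1 f2 : ℝ → ℝ} (h0 : ∀ x, HasDerivAt f0 (f1 x) x)
    (h1 : ∀ x, HasDerivAt f1 (f2 x) x) {r M : ℝ} (hM : ∀ x, |x - r| ≤ 1 → |f2 x| ≤ M)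
    {y : ℝ} (hy : |y - r| ≤ 1) : |f0 y - f0 r - (y - r) * f1 r| ≤ M * |y - r| ^ 2 := by
  have hseg : ∀ x ∈ Set.uIcc r y, |x - r| ≤ |y - r| := fun x hx => Set.abs_sub_left_of_mem_uIcc hx
  have hM0 : 0 ≤ M := (abs_nonneg _).trans (hM r (by simp))
  have e1 : ∀ x ∈ Set.uIcc r y, |f1 x - f1 r| ≤ M * |y - r| := by
    intro x hx
    have := (convex_uIcc r y).norm_image_sub_le_of_norm_hasDerivWithin_le (f := f1) (f' := f2)
      (C := M) (fun x _ => (h1 x).hasDerivWithinAt)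
      (fun x hx => hM x ((hseg x hx).trans hy)) Set.left_mem_uIcc hx
    exact this.trans (mul_le_mul_of_nonneg_left (hseg x hx) hM0)
  have := (convex_uIcc r y).norm_image_sub_le_of_norm_hasDerivWithin_le
      (f := fun x => f0 x - x * f1 r) (f' := fun x => f1 x - f1 r)
      (C := M * |y - r|) (fun x _ => by
        have := (h0 x).sub ((hasDerivAt_id x).mul_const (f1 r))
        rw [one_mul] at this
        exact this.hasDerivWithinAt)
      e1 Set.left_mem_uIcc Set.right_mem_uIcc
  calc _ = ‖f0 y - y * f1 r - (f0 r - r * f1 r)‖ := by rw [Real.norm_eq_abs]; ring_nf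
    _ ≤ _ := this
    _ = _ := by rw [Real.norm_eq_abs]; ring

lemma mkB_hasDerivAt (φ : ℕ → Z → ℝ → ℝ) (hc : ∀ j r, Continuous fun z => φ j z r)
    (hd : ∀ j z r, HasDerivAt (φ j z) (φ (j + 1) z r) r)
    (hM : ∀ j r, ∃ M, ∀ z r', |r' - r| ≤ 1 → |φ j z r'| ≤ M) (j : ℕ) (r : ℝ) :
    HasDerivAt (fun r => mkB (fun z => φ j z r)) (mkB (fun z => φ (j + 1) z r)) r := by
  have hap : ∀ j r z, mkB (fun z => φ j z r) z = φ j z r := fun j r z =>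
    mkB_apply (hc j r) (by
      obtain ⟨M, hM⟩ := hM j r
      exact ⟨M, fun z => hM z r (by simp)⟩) z
  obtain ⟨M, hM⟩ := hM (j + 2) r
  rw [hasDerivAt_iff_isLittleO]
  have hO : (fun y => mkB (fun z => φ j z y) - mkB (fun z => φ j z r) -
      (y - r) • mkB (fun z => φ (j + 1) z r)) =O[nhds r] fun y => ‖y - r‖ ^ 2 := by
    refine Asymptotics.IsBigO.of_bound (max M 0) ?_
    filter_upwards [Metric.closedBall_mem_nhds r one_pos] with y hy
    rw [Metric.mem_closedBall, Real.dist_eq] at hy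
    rw [BoundedContinuousFunction.norm_le (by positivity)]
    intro z
    have := taylor_bound (hd j z) (hd (j + 1) z) (r := r) (M := M) (fun x hx => hM z x hx) hy
    simp only [BoundedContinuousFunction.coe_sub, BoundedContinuousFunction.coe_smul,
      Pi.sub_apply, hap, smul_eq_mul]
    rw [norm_pow, norm_norm]
    exact this.trans (by gcongr; exacts [le_max_left _ _, le_rfl])
  exact hO.trans_isLittleO (Asymptotics.isLittleO_pow_sub_sub r one_lt_two)

lemma mkB_norm_le {f : Z → ℝ} (h : Continuous f) {C : ℝ} (hC0 : 0 ≤ C) (hC : ∀ z, |f z| ≤ C) :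
    ‖mkB f‖ ≤ C := by
  rw [BoundedContinuousFunction.norm_le hC0]
  intro z
  rw [mkB_apply h ⟨C, hC⟩]
  exact hC z

end BC

lemma SP.zero {F : Type*} [NormedAddCommGroup F] [NormedSpace ℝ F] (n : ℕ) (m w : ℝ) :
    SP n m w (fun _ => (0 : F)) := by
  induction n generalizing m with
  | zero => exact ⟨0, le_rfl, by simp⟩
  | succ n ih =>
    refine ⟨⟨0, le_rfl, by simp⟩, fun _ => 0, fun _ => 0, fun p => ?_, ih _, ih _⟩
    refine (hasFDerivAt_const _ _).congr_fderiv ?_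
    ext <;> simp [pd_apply]

lemma SP.kappa {K : ℝ → ℝ → ℝ} {m : ℝ} (hm : m ≤ 0) (hK : ∀ n, QP n m K) (n j : ℕ) :
    SP n (m - j) 0 (fun p : ℝ × ℝ =>
      mkB (fun z : ℝ × ℝ => iteratedDeriv j (K z.1) p.2)) := by
  have hfam := QP.family hK
  have hcont : ∀ (j : ℕ) (r : ℝ), Continuous fun z : ℝ × ℝ => iteratedDeriv j (K z.1) r :=
    fun j r => ((hfam j).1 r).comp continuous_fst
  have hb : ∀ j : ℕ, SB (m - j) 0 (fun p : ℝ × ℝ =>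
      mkB (fun z : ℝ × ℝ => iteratedDeriv j (K z.1) p.2)) := by
    intro j
    obtain ⟨C, hC, h⟩ := (hfam j).2.1
    refine ⟨C, hC, fun s l _ => ?_⟩
    have := (mu_pos l).le
    simp only [neg_zero, zero_mul, exp_zero, mul_one]
    exact mkB_norm_le (hcont j l) (by positivity) fun z => h z.1 l
  induction n generalizing j with
  | zero => exact hb j
  | succ n ih =>
    refine ⟨hb j, fun _ => 0, fun p : ℝ × ℝ =>
      mkB (fun z : ℝ × ℝ => iteratedDeriv (j + 1) (K z.1) p.2), fun p => ?_, SP.zero _ _ _, ?_⟩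
    rotate_left
    · have := ih (j + 1)
      rw [show m - ((j + 1 : ℕ) : ℝ) = m - j - 1 by push_cast; ring] at this
      exact this
    · have := mkB_hasDerivAt (fun j (z : ℝ × ℝ) r => iteratedDeriv j (K z.1) r) hcont
        (fun j z r => (hfam j).2.2 z.1 r) (fun j r => by
          obtain ⟨C, hC, h⟩ := (hfam j).2.1
          refine ⟨C, fun z r' _ => (h z.1 r').trans ?_⟩
          refine mul_le_of_le_one_right hC ?_
          exact Real.rpow_le_one_of_one_le_of_nonpos (mu_ge_one _) (by
            have : (0 : ℝ) ≤ j := Nat.cast_nonneg j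
            linarith)) j p.2
      refine ((this.hasFDerivAt.comp p hasFDerivAt_snd)).congr_fderiv ?_
      ext <;> simp [pd_apply]

/-- The shifted potential, weighted. -/
def vk (γ : ℝ) (V : ℝ → ℝ) (k : ℕ) (z : ℝ × ℝ) (s : ℝ) : ℝ :=
  exp (γ * |z.1|) * iteratedDeriv k V (s + (|z.2| + |z.1|))

def Decay (γ : ℝ) (V : ℝ → ℝ) : Prop :=
  ContDiff ℝ (⊤ : ℕ∞) V ∧ ∀ k : ℕ, ∃ C : ℝ, 0 ≤ C ∧ ∀ x, |iteratedDeriv k V x| ≤ C * exp (-γ * |x|)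

lemma Decay.hasDerivAt {γ : ℝ} {V : ℝ → ℝ} (h : Decay γ V) (k : ℕ) (x : ℝ) :
    HasDerivAt (iteratedDeriv k V) (iteratedDeriv (k + 1) V x) x := by
  rw [iteratedDeriv_succ]
  have : Differentiable ℝ (iteratedDeriv k V) :=
    h.1.differentiable_iteratedDeriv k (by exact_mod_cast ENat.natCast_lt_top k)
  exact (this x).hasDerivAt

lemma Decay.continuous {γ : ℝ} {V : ℝ → ℝ} (h : Decay γ V) (k : ℕ) :
    Continuous (iteratedDeriv k V) :=
  continuous_iff_continuousAt.2 fun x => (h.hasDerivAt k x).continuousAt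

lemma vk_continuous {γ : ℝ} {V : ℝ → ℝ} (h : Decay γ V) (k : ℕ) (s : ℝ) :
    Continuous (fun z => vk γ V k z s) := by
  have := h.continuous k
  unfold vk
  fun_prop

lemma vk_le {γ : ℝ} (hγ : 0 < γ) {V : ℝ → ℝ} (h : Decay γ V) (k : ℕ) :
    ∃ C, 0 ≤ C ∧ ∀ z s, |vk γ V k z s| ≤ C * exp (-γ * s) := by
  obtain ⟨C, hC, h⟩ := h.2 k
  refine ⟨C, hC, fun z s => ?_⟩
  unfold vk
  rw [abs_mul, abs_of_pos (exp_pos _)]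
  calc _ ≤ exp (γ * |z.1|) * (C * exp (-γ * |s + (|z.2| + |z.1|)|)) := by gcongr; exact h _
    _ = C * exp (γ * |z.1| + -γ * |s + (|z.2| + |z.1|)|) := by rw [Real.exp_add]; ring
    _ ≤ _ := by
      gcongr
      have := le_abs_self (s + (|z.2| + |z.1|))
      have := abs_nonneg z.2
      nlinarith

lemma SP.pot {γ : ℝ} (hγ : 0 < γ) {V : ℝ → ℝ} (h : Decay γ V) (n k : ℕ) :
    SP n 0 γ (fun p : ℝ × ℝ => mkB (fun z : ℝ × ℝ => vk γ V k z p.1)) := by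
  have hb : ∀ k, SB 0 γ (fun p : ℝ × ℝ => mkB (fun z : ℝ × ℝ => vk γ V k z p.1)) := by
    intro k
    obtain ⟨C, hC, h'⟩ := vk_le hγ h k
    refine ⟨C, hC, fun s l _ => ?_⟩
    rw [Real.rpow_zero, mul_one]
    exact mkB_norm_le (vk_continuous h k s) (by positivity) fun z => h' z s
  induction n generalizing k with
  | zero => exact hb k
  | succ n ih =>
    refine ⟨hb k, _, fun _ => 0, fun p => ?_, ih (k + 1), SP.zero _ _ _⟩
    have := mkB_hasDerivAt (vk γ V) (vk_continuous h) (fun j z r => by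
        unfold vk
        have := (h.hasDerivAt j (r + (|z.2| + |z.1|))).comp_add_const r (|z.2| + |z.1|)
        exact this.const_mul _) (fun j r => by
          obtain ⟨C, hC, h⟩ := vk_le hγ h j
          refine ⟨C * exp (-γ * (r - 1)), fun z r' hr => (h z r').trans ?_⟩
          have := (abs_le.1 hr).1
          gcongr C * exp ?_
          nlinarith) k p.1
    refine ((this.hasFDerivAt.comp p hasFDerivAt_fst)).congr_fderiv ?_
    ext <;> simp [pd_apply]

/-! ### The integral operator -/

abbrev EE := ℝ →ᵇ (ℂ × ℂ)

lemma Op_integrable {γ : ℝ} (hγ : 0 < γ) (q : (ℝ × ℝ) →ᵇ ℝ) (h : EE) (x : ℝ) :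
    IntegrableOn (fun t : ℝ => (exp (-γ * t) * q (t, x)) • h (|x| + t)) (Set.Ioi 0) := by
  have hi : IntegrableOn (fun t : ℝ => ‖q‖ * ‖h‖ * exp (-γ * t)) (Set.Ioi 0) :=
    (exp_neg_integrableOn_Ioi 0 hγ).const_mul _
  refine Integrable.mono' hi (Continuous.aestronglyMeasurable (by fun_prop)) ?_
  refine Filter.Eventually.of_forall fun t => ?_
  rw [norm_smul, norm_mul, Real.norm_eq_abs, abs_of_pos (exp_pos _)]
  calc _ ≤ exp (-γ * t) * ‖q‖ * ‖h‖ := by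
        gcongr
        · exact q.norm_coe_le_norm _
        · exact h.norm_coe_le_norm _
    _ = _ := by ring

def OpFun {γ : ℝ} (hγ : 0 < γ) (q : (ℝ × ℝ) →ᵇ ℝ) (h : EE) : EE :=
  BoundedContinuousFunction.ofNormedAddCommGroup
    (fun x => ∫ t in Set.Ioi (0:ℝ), (exp (-γ * t) * q (t, x)) • h (|x| + t))
    (by
      refine continuous_of_dominated (bound := fun t : ℝ => ‖q‖ * ‖h‖ * exp (-γ * t))
        (fun x => (Op_integrable hγ q h x).aestronglyMeasurable) ?_
        ((exp_neg_integrableOn_Ioi 0 hγ).const_mul _) ?_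
      · refine fun x => Filter.Eventually.of_forall fun t => ?_
        rw [norm_smul, norm_mul, Real.norm_eq_abs, abs_of_pos (exp_pos _)]
        calc _ ≤ exp (-γ * t) * ‖q‖ * ‖h‖ := by
              gcongr
              · exact q.norm_coe_le_norm _
              · exact h.norm_coe_le_norm _
          _ = _ := by ring
      · exact Filter.Eventually.of_forall fun t => by fun_prop)
    (1 / γ * ‖q‖ * ‖h‖)
    (by
      intro x
      have hi := (exp_neg_integrableOn_Ioi 0 hγ).const_mul (‖q‖ * ‖h‖)
      refine (norm_integral_le_of_norm_le hi ?_).trans ?_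
      · refine Filter.Eventually.of_forall fun t => ?_
        rw [norm_smul, norm_mul, Real.norm_eq_abs, abs_of_pos (exp_pos _)]
        calc _ ≤ exp (-γ * t) * ‖q‖ * ‖h‖ := by
              gcongr
              · exact q.norm_coe_le_norm _
              · exact h.norm_coe_le_norm _
          _ = _ := by ring
      · rw [integral_const_mul, integral_exp_mul_Ioi (by linarith)]
        apply le_of_eq
        simp
        field_simp)

lemma OpFun_norm {γ : ℝ} (hγ : 0 < γ) (q : (ℝ × ℝ) →ᵇ ℝ) (h : EE) :
    ‖OpFun hγ q h‖ ≤ 1 / γ * ‖q‖ * ‖h‖ :=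
  BoundedContinuousFunction.norm_ofNormedAddCommGroup_le _ (by positivity) _

lemma OpFun_apply {γ : ℝ} (hγ : 0 < γ) (q : (ℝ × ℝ) →ᵇ ℝ) (h : EE) (x : ℝ) :
    OpFun hγ q h x = ∫ t in Set.Ioi (0:ℝ), (exp (-γ * t) * q (t, x)) • h (|x| + t) := rfl

def Op {γ : ℝ} (hγ : 0 < γ) : ((ℝ × ℝ) →ᵇ ℝ) →L[ℝ] EE →L[ℝ] EE :=
  LinearMap.mkContinuous₂ (LinearMap.mk₂ ℝ (OpFun hγ)
    (fun q q' h => by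
      ext1 x
      simp only [BoundedContinuousFunction.coe_add, Pi.add_apply, OpFun_apply, mul_add, add_smul]
      exact integral_add (Op_integrable hγ q h x) (Op_integrable hγ q' h x))
    (fun c q h => by
      ext1 x
      simp only [BoundedContinuousFunction.coe_smul, OpFun_apply, smul_eq_mul]
      rw [← integral_smul]
      congr 1; ext1 t
      rw [smul_smul]; ring_nf)
    (fun q h h' => by
      ext1 x
      simp only [BoundedContinuousFunction.coe_add, Pi.add_apply, OpFun_apply, smul_add]
      exact integral_add (Op_integrable hγ q h x) (Op_integrable hγ q h' x))
    (fun c q h => by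
      ext1 x
      simp only [BoundedContinuousFunction.coe_smul, OpFun_apply]
      rw [← integral_smul]
      congr 1; ext1 t
      rw [smul_comm])) (1 / γ) (fun q h => OpFun_norm hγ q h)

lemma Op_apply {γ : ℝ} (hγ : 0 < γ) (q : (ℝ × ℝ) →ᵇ ℝ) (h : EE) (x : ℝ) :
    Op hγ q h x = ∫ t in Set.Ioi (0:ℝ), (exp (-γ * t) * q (t, x)) • h (|x| + t) := rfl

def liftA (A : ℂ × ℂ →L[ℝ] ℂ × ℂ) : EE →L[ℝ] EE := A.compLeftContinuousBounded ℝ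

lemma liftA_apply (A : ℂ × ℂ →L[ℝ] ℂ × ℂ) (h : EE) (x : ℝ) : liftA A h x = A (h x) := rfl

def Tij {γ : ℝ} (hγ : 0 < γ) (K : ℝ → ℝ → ℝ) (V : ℝ → ℝ) (A : ℂ × ℂ →L[ℝ] ℂ × ℂ) (p : ℝ × ℝ) :
    EE →L[ℝ] EE :=
  (Op hγ (mkB (fun z : ℝ × ℝ => iteratedDeriv 0 (K z.1) p.2) *
    mkB (fun z : ℝ × ℝ => vk γ V 0 z p.1))) * liftA A

lemma SP.Tij {γ : ℝ} (hγ : 0 < γ) {K : ℝ → ℝ → ℝ} {V : ℝ → ℝ} (hK : ∀ n, QP n (-1) K)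
    (hV : Decay γ V) (A : ℂ × ℂ →L[ℝ] ℂ × ℂ) (n : ℕ) : SP n (-1) γ (Tij hγ K V A) := by
  have h1 := SP.kappa (by norm_num) hK n 0
  have h2 := SP.pot hγ hV n 0
  have h3 := h1.mul h2
  rw [show (-1 : ℝ) - ((0 : ℕ) : ℝ) + 0 = -1 by norm_num, zero_add] at h3
  have h3' : SP n (-1) γ (fun p : ℝ × ℝ =>
    (mkB (fun z : ℝ × ℝ => iteratedDeriv 0 (K z.1) p.2) *
      mkB (fun z : ℝ × ℝ => vk γ V 0 z p.1))) := h3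
  have h4 : SP n (-1) γ (fun p : ℝ × ℝ => Op hγ
    (mkB (fun z : ℝ × ℝ => iteratedDeriv 0 (K z.1) p.2) *
      mkB (fun z : ℝ × ℝ => vk γ V 0 z p.1))) := by
    have := SP.clm (F := (ℝ × ℝ) →ᵇ ℝ) (G := EE →L[ℝ] EE) (L := Op hγ) h3'
    exact this
  exact SP.clm (F := EE →L[ℝ] EE) (G := EE →L[ℝ] EE) h4 ((ContinuousLinearMap.compL ℝ EE EE EE).flip (liftA A))

lemma Tij_apply {γ : ℝ} (hγ : 0 < γ) {K : ℝ → ℝ → ℝ} {V : ℝ → ℝ} (hK : ∀ n, QP n (-1) K)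
    (hV : Decay γ V) (A : ℂ × ℂ →L[ℝ] ℂ × ℂ) (p : ℝ × ℝ) (h : EE) (x : ℝ) :
    Tij hγ K V A p h x = ∫ t in Set.Ioi (0:ℝ),
      (K t p.2 * V (p.1 + (|x| + t))) • A (h (|x| + t)) := by
  unfold Tij
  rw [mul_apply_eq_comp, Op_apply]
  refine setIntegral_congr_fun measurableSet_Ioi fun t ht => ?_
  have ht : 0 < t := ht
  obtain ⟨C, hC, h1⟩ := vk_le hγ hV 0
  obtain ⟨D, hD, h2⟩ := (QP.family hK 0).2.1
  simp only [liftA_apply, BoundedContinuousFunction.coe_mul, Pi.mul_apply]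
  rw [mkB_apply (f := fun z : ℝ × ℝ => iteratedDeriv 0 (K z.1) p.2)
      (((QP.family hK 0).1 p.2).comp continuous_fst) ⟨_, fun z => h2 z.1 p.2⟩,
    mkB_apply (vk_continuous hV 0 p.1) ⟨_, fun z => h1 z p.1⟩]
  congr 1
  simp only [vk, iteratedDeriv_zero, abs_of_pos ht]
  have : exp (-γ * t) * exp (γ * t) = 1 := by rw [← Real.exp_add]; simp
  linear_combination (K t p.2 * V (p.1 + (|x| + t))) * this

lemma Tij_integrable {γ : ℝ} (hγ : 0 < γ) {K : ℝ → ℝ → ℝ} {V : ℝ → ℝ} (hK : ∀ n, QP n (-1) K)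
    (hV : Decay γ V) (A : ℂ × ℂ →L[ℝ] ℂ × ℂ) (p : ℝ × ℝ) (h : EE) (x : ℝ) :
    IntegrableOn (fun t => (K t p.2 * V (p.1 + (|x| + t))) • A (h (|x| + t))) (Set.Ioi 0) := by
  have := Op_integrable hγ (mkB (fun z : ℝ × ℝ => iteratedDeriv 0 (K z.1) p.2) *
    mkB (fun z : ℝ × ℝ => vk γ V 0 z p.1)) (liftA A h) x
  refine this.congr_fun (fun t ht => ?_) measurableSet_Ioi
  have ht : 0 < t := ht
  obtain ⟨C, hC, h1⟩ := vk_le hγ hV 0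
  obtain ⟨D, hD, h2⟩ := (QP.family hK 0).2.1
  simp only [liftA_apply, BoundedContinuousFunction.coe_mul, Pi.mul_apply]
  rw [mkB_apply (f := fun z : ℝ × ℝ => iteratedDeriv 0 (K z.1) p.2)
      (((QP.family hK 0).1 p.2).comp continuous_fst) ⟨_, fun z => h2 z.1 p.2⟩,
    mkB_apply (vk_continuous hV 0 p.1) ⟨_, fun z => h1 z p.1⟩]
  congr 1
  simp only [vk, iteratedDeriv_zero, abs_of_pos ht]
  have : exp (-γ * t) * exp (γ * t) = 1 := by rw [← Real.exp_add]; simp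
  linear_combination (K t p.2 * V (p.1 + (|x| + t))) * this

open Real MeasureTheory Filter Topology
open scoped BoundedContinuousFunction

/-! ### Volterra estimate -/

lemma volterra_pow (T : EE →L[ℝ] EE) (φ Φ : ℝ → ℝ) (hd : ∀ x, HasDerivAt Φ (-φ x) x)
    (hφ : ∀ x, 0 ≤ φ x) (hΦ : ∀ x, 0 ≤ Φ x) (hlim : Tendsto Φ atTop (𝓝 0))
    (hT : ∀ h x, ‖T h x‖ ≤ ∫ t in Set.Ioi (0:ℝ), φ (|x| + t) * ‖h (|x| + t)‖)
    (n : ℕ) (h : EE) (x : ℝ) : ‖(T ^ n) h x‖ ≤ Φ |x| ^ n / n.factorial * ‖h‖ := by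
  induction n generalizing x with
  | zero => simpa using h.norm_coe_le_norm x
  | succ n ih =>
    rw [pow_succ']
    refine (hT ((T ^ n) h) x).trans ?_
    have hder : ∀ t ∈ Set.Ici (0:ℝ), HasDerivAt
        (fun t => -(Φ (|x| + t) ^ (n + 1) / (n + 1).factorial * ‖h‖))
        (φ (|x| + t) * (Φ (|x| + t) ^ n / n.factorial * ‖h‖)) t := by
      intro t _
      have h1 : HasDerivAt (fun t => Φ (|x| + t)) (-φ (|x| + t)) t :=
        (hd (|x| + t)).comp_const_add |x| t
      refine (((h1.pow (n + 1)).div_const _).mul_const _).neg.congr_deriv ?_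
      rw [Nat.factorial_succ]
      have : (n.factorial : ℝ) ≠ 0 := by positivity
      have : (n : ℝ) + 1 ≠ 0 := by positivity
      push_cast
      field_simp
    have hnn : ∀ t ∈ Set.Ioi (0:ℝ), 0 ≤ φ (|x| + t) * (Φ (|x| + t) ^ n / n.factorial * ‖h‖) := by
      intro t _
      have := hφ (|x| + t)
      have := hΦ (|x| + t)
      positivity
    have htend : Tendsto (fun t => -(Φ (|x| + t) ^ (n + 1) / (n + 1).factorial * ‖h‖)) atTop
        (𝓝 0) := by
      have h1 : Tendsto (fun t => Φ (|x| + t)) atTop (𝓝 0) :=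
        hlim.comp (tendsto_atTop_add_const_left _ _ tendsto_id)
      have := (((h1.pow (n + 1)).div_const ((n + 1).factorial : ℝ)).mul_const ‖h‖).neg
      simpa using this
    have hint := integral_Ioi_of_hasDerivAt_of_nonneg' hder hnn htend
    have hin := integrableOn_Ioi_deriv_of_nonneg' hder hnn htend
    calc _ ≤ ∫ t in Set.Ioi (0:ℝ), φ (|x| + t) * (Φ (|x| + t) ^ n / n.factorial * ‖h‖) := by
          refine integral_mono_of_nonneg (Eventually.of_forall fun t => ?_) hin ?_
          · exact mul_nonneg (hφ _) (norm_nonneg _)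
          · filter_upwards [ae_restrict_mem measurableSet_Ioi] with t ht
            have ht : 0 < t := ht
            have := ih (|x| + t)
            rw [abs_of_nonneg (by positivity : 0 ≤ |x| + t)] at this
            exact mul_le_mul_of_nonneg_left this (hφ _)
      _ = _ := by rw [hint]; simp

lemma isUnit_of_pow_le {A : Type*} [NormedRing A] [CompleteSpace A] (T : A) (M : ℝ)
    (hT : ∀ n : ℕ, ‖T ^ n‖ ≤ M ^ n / n.factorial) :
    IsUnit (1 - T) ∧ ‖Ring.inverse (1 - T)‖ ≤ exp M := by
  have hs : HasSum (fun n : ℕ => M ^ n / n.factorial) (exp M) := by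
    rw [Real.exp_eq_exp_ℝ]; exact NormedSpace.expSeries_div_hasSum_exp M
  have hsum : Summable (fun n : ℕ => T ^ n) := Summable.of_norm_bounded hs.summable hT
  set R := ∑' n : ℕ, T ^ n with hR
  have h1 : R = 1 + T * R := by
    rw [hR, ← hsum.tsum_mul_left T, hsum.tsum_eq_zero_add]
    simp [pow_succ']
  have h2 : R = 1 + R * T := by
    rw [hR, ← hsum.tsum_mul_right T, hsum.tsum_eq_zero_add]
    simp [pow_succ]
  have e1 : (1 - T) * R = 1 := by rw [sub_mul, one_mul]; nth_rw 1 [h1]; abel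
  have e2 : R * (1 - T) = 1 := by rw [mul_sub, mul_one]; nth_rw 1 [h2]; abel
  let u : Aˣ := ⟨1 - T, R, e1, e2⟩
  refine ⟨⟨u, rfl⟩, ?_⟩
  have : Ring.inverse (1 - T) = R := Ring.inverse_unit u
  rw [this]
  exact tsum_of_norm_bounded hs hT

lemma ring_inv_aux {A : Type*} [Ring A] (T : A) (h : IsUnit (1 - T)) :
    Ring.inverse (1 - T) * T = Ring.inverse (1 - T) - 1 := by
  have := Ring.inverse_mul_cancel _ h
  rw [mul_sub, mul_one, sub_eq_iff_eq_add] at this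
  exact eq_sub_of_add_eq' this.symm

lemma volterra_unit (T : EE →L[ℝ] EE) (φ Φ : ℝ → ℝ) (hd : ∀ x, HasDerivAt Φ (-φ x) x)
    (hφ : ∀ x, 0 ≤ φ x) (hΦ : ∀ x, 0 ≤ Φ x) (hlim : Tendsto Φ atTop (𝓝 0))
    (hT : ∀ h x, ‖T h x‖ ≤ ∫ t in Set.Ioi (0:ℝ), φ (|x| + t) * ‖h (|x| + t)‖)
    (M : ℝ) (hM : ∀ x, Φ x ≤ M) :
    IsUnit (1 - T) ∧ ‖Ring.inverse (1 - T)‖ ≤ exp M := by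
  have hM0 : 0 ≤ M := (hΦ 0).trans (hM 0)
  refine isUnit_of_pow_le (A := EE →L[ℝ] EE) T M fun n => ?_
  refine ContinuousLinearMap.opNorm_le_bound _ (by positivity) fun h => ?_
  rw [BoundedContinuousFunction.norm_le (by positivity)]
  intro x
  refine (volterra_pow T φ Φ hd hφ hΦ hlim hT n h x).trans ?_
  have := hΦ |x|
  gcongr
  exact hM _

/-- Explicit integrable majorant of `exp (-γ|y|)`. -/
def psi (γ y : ℝ) : ℝ := γ * exp (γ * y) / (1 + exp (γ * y)) ^ 2
def Psi (γ y : ℝ) : ℝ := (1 + exp (γ * y))⁻¹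

lemma psi_nonneg {γ : ℝ} (hγ : 0 < γ) (y : ℝ) : 0 ≤ psi γ y := by unfold psi; positivity
lemma psi_cont (γ : ℝ) : Continuous (psi γ) := by
  unfold psi
  refine Continuous.div (by fun_prop) (by fun_prop) fun x => ?_
  positivity
lemma Psi_nonneg (γ y : ℝ) : 0 ≤ Psi γ y := by unfold Psi; positivity
lemma Psi_le (γ y : ℝ) : Psi γ y ≤ 1 := by
  unfold Psi
  exact inv_le_one_of_one_le₀ (by have := exp_pos (γ * y); linarith)

lemma Psi_deriv (γ y : ℝ) : HasDerivAt (Psi γ) (-psi γ y) y := by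
  have h : HasDerivAt (fun y => 1 + exp (γ * y)) (exp (γ * y) * γ) y := by
    have : HasDerivAt (fun y => γ * y) γ y := by simpa using (hasDerivAt_id y).const_mul γ
    exact this.exp.const_add 1
  refine (h.inv (by positivity)).congr_deriv ?_
  unfold psi; ring

lemma Psi_tendsto {γ : ℝ} (hγ : 0 < γ) : Tendsto (Psi γ) atTop (𝓝 0) := by
  unfold Psi
  refine Tendsto.inv_tendsto_atTop ?_
  refine tendsto_atTop_add_const_left _ _ ?_
  exact tendsto_exp_atTop.comp (tendsto_id.const_mul_atTop hγ)

lemma exp_le_psi {γ : ℝ} (hγ : 0 < γ) (y : ℝ) : exp (-γ * |y|) ≤ 4 / γ * psi γ y := by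
  have : 4 / γ * psi γ y = 4 * exp (γ * y) / (1 + exp (γ * y)) ^ 2 := by
    unfold psi; field_simp
  rw [this, le_div_iff₀ (by positivity)]
  rcases le_total 0 y with h | h
  · rw [abs_of_nonneg h, neg_mul, exp_neg]
    have h1 : 1 ≤ exp (γ * y) := one_le_exp (by positivity)
    have : 0 < exp (γ * y) := exp_pos _
    rw [inv_mul_le_iff₀ this]
    nlinarith
  · rw [abs_of_nonpos h, show -γ * -y = γ * y by ring]
    have h1 : exp (γ * y) ≤ 1 := exp_le_one_iff.2 (by nlinarith)
    have : 0 < exp (γ * y) := exp_pos _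
    have h2 : (1 + exp (γ * y)) ^ 2 ≤ 4 := by nlinarith
    nlinarith

lemma Tij_bound {γ : ℝ} (hγ : 0 < γ) {K : ℝ → ℝ → ℝ} {V : ℝ → ℝ} (hK : ∀ n, QP n (-1) K)
    (hV : Decay γ V) (A : ℂ × ℂ →L[ℝ] ℂ × ℂ) :
    ∃ B, 0 ≤ B ∧ ∀ p h x, ‖Tij hγ K V A p h x‖ ≤
      B * ∫ t in Set.Ioi (0:ℝ), psi γ (p.1 + (|x| + t)) * ‖h (|x| + t)‖ := by
  obtain ⟨C, hC, h1⟩ := hV.2 0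
  obtain ⟨D, hD, h2⟩ := (hK 0).b.2
  refine ⟨D * (C * (4 / γ)) * ‖A‖, by positivity, fun p h x => ?_⟩
  have hder : ∀ t ∈ Set.Ici (0:ℝ), HasDerivAt (fun t => -Psi γ (p.1 + (|x| + t)))
      (psi γ (p.1 + (|x| + t))) t := by
    intro t _
    have e1 : HasDerivAt (fun t => p.1 + (|x| + t)) 1 t :=
      ((hasDerivAt_id t).const_add |x|).const_add p.1
    refine (((Psi_deriv γ _).comp t e1).neg).congr_deriv ?_
    ring
  have htend : Tendsto (fun t => -Psi γ (p.1 + (|x| + t))) atTop (𝓝 (-0)) :=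
    ((Psi_tendsto hγ).comp (tendsto_atTop_add_const_left _ _
      (tendsto_atTop_add_const_left _ _ tendsto_id))).neg
  have hin := integrableOn_Ioi_deriv_of_nonneg' hder (fun t _ => psi_nonneg hγ _) htend
  have hin2 : IntegrableOn (fun t => psi γ (p.1 + (|x| + t)) * ‖h (|x| + t)‖) (Set.Ioi 0) := by
    refine Integrable.mono' (hin.mul_const ‖h‖) ?_ (Eventually.of_forall fun t => ?_)
    · have := psi_cont γ
      exact Continuous.aestronglyMeasurable (by fun_prop)
    · rw [norm_mul, norm_norm, Real.norm_eq_abs, abs_of_nonneg (psi_nonneg hγ _)]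
      exact mul_le_mul_of_nonneg_left (h.norm_coe_le_norm _) (psi_nonneg hγ _)
  rw [Tij_apply hγ hK hV, ← integral_const_mul]
  refine norm_integral_le_of_norm_le (hin2.const_mul _) ?_
  refine Eventually.of_forall fun t => ?_
  rw [norm_smul, norm_mul, Real.norm_eq_abs, Real.norm_eq_abs]
  have a1 : |K t p.2| ≤ D := (h2 t p.2).trans (mul_le_of_le_one_right hD
    (Real.rpow_le_one_of_one_le_of_nonpos (mu_ge_one _) (by norm_num)))
  have a2 : |V (p.1 + (|x| + t))| ≤ C * (4 / γ) * psi γ (p.1 + (|x| + t)) := by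
    have := h1 (p.1 + (|x| + t))
    rw [iteratedDeriv_zero] at this
    refine this.trans ?_
    rw [mul_assoc]
    exact mul_le_mul_of_nonneg_left (exp_le_psi hγ _) hC
  have a4 := psi_nonneg hγ (p.1 + (|x| + t))
  have a3 := A.le_opNorm (h (|x| + t))
  calc _ ≤ D * (C * (4 / γ) * psi γ (p.1 + (|x| + t))) * (‖A‖ * ‖h (|x| + t)‖) := by gcongr
    _ = _ := by ring

/-! ### The full operator -/

def A11 : ℂ × ℂ →L[ℝ] ℂ × ℂ := (ContinuousLinearMap.fst ℝ ℂ ℂ).prod 0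
def A12 : ℂ × ℂ →L[ℝ] ℂ × ℂ := (ContinuousLinearMap.snd ℝ ℂ ℂ).prod 0
def A21 : ℂ × ℂ →L[ℝ] ℂ × ℂ := (0 : ℂ × ℂ →L[ℝ] ℂ).prod (ContinuousLinearMap.snd ℝ ℂ ℂ)
def A22 : ℂ × ℂ →L[ℝ] ℂ × ℂ := (0 : ℂ × ℂ →L[ℝ] ℂ).prod (ContinuousLinearMap.fst ℝ ℂ ℂ)

def TT {γ : ℝ} (hγ : 0 < γ) (V₁ V₂ : ℝ → ℝ) (p : ℝ × ℝ) : EE →L[ℝ] EE :=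
  ((Tij hγ K1 V₁ A11 p + Tij hγ K1 V₂ A12 p) + Tij hγ K2 V₁ A21 p) + Tij hγ K2 V₂ A22 p

section

lemma TT_SP {γ : ℝ} (hγ : 0 < γ) {V₁ V₂ : ℝ → ℝ} (h1 : Decay γ V₁) (h2 : Decay γ V₂)
    (n : ℕ) : SP n (-1) γ (TT hγ V₁ V₂) :=
  (((SP.Tij hγ K1_QP h1 A11 n).add (SP.Tij hγ K1_QP h2 A12 n)).add
    (SP.Tij hγ K2_QP h1 A21 n)).add (SP.Tij hγ K2_QP h2 A22 n)

lemma TT_unit {γ : ℝ} (hγ : 0 < γ) {V₁ V₂ : ℝ → ℝ} (h1 : Decay γ V₁) (h2 : Decay γ V₂)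
    : ∃ C, ∀ p, IsUnit (1 - TT hγ V₁ V₂ p) ∧
    ‖Ring.inverse (1 - TT hγ V₁ V₂ p)‖ ≤ C := by
  obtain ⟨B1, hB1, b1⟩ := Tij_bound hγ K1_QP h1 A11
  obtain ⟨B2, hB2, b2⟩ := Tij_bound hγ K1_QP h2 A12
  obtain ⟨B3, hB3, b3⟩ := Tij_bound hγ K2_QP h1 A21
  obtain ⟨B4, hB4, b4⟩ := Tij_bound hγ K2_QP h2 A22
  set B := B1 + B2 + B3 + B4 with hB
  have hB0 : 0 ≤ B := by positivity
  refine ⟨exp B, fun p => ?_⟩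
  refine volterra_unit _ (fun y => B * psi γ (p.1 + y)) (fun y => B * Psi γ (p.1 + y))
    (fun x => ?_) (fun x => mul_nonneg hB0 (psi_nonneg hγ _))
    (fun x => mul_nonneg hB0 (Psi_nonneg γ _)) ?_ (fun h x => ?_) B
    (fun x => mul_le_of_le_one_right hB0 (Psi_le _ _))
  · refine (((Psi_deriv γ (p.1 + x)).comp_const_add p.1 x).const_mul B).congr_deriv ?_
    ring
  · simpa using ((Psi_tendsto hγ).comp (tendsto_atTop_add_const_left _ p.1 tendsto_id)).const_mul B
  · have e : TT hγ V₁ V₂ p h x = Tij hγ K1 V₁ A11 p h x + Tij hγ K1 V₂ A12 p h x +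
      Tij hγ K2 V₁ A21 p h x + Tij hγ K2 V₂ A22 p h x := rfl
    rw [e]
    refine (norm_add_le _ _).trans ?_
    have n1 := norm_add_le (Tij hγ K1 V₁ A11 p h x + Tij hγ K1 V₂ A12 p h x)
      (Tij hγ K2 V₁ A21 p h x)
    have n2 := norm_add_le (Tij hγ K1 V₁ A11 p h x) (Tij hγ K1 V₂ A12 p h x)
    have := b1 p h x
    have := b2 p h x
    have := b3 p h x
    have := b4 p h x
    simp only [mul_assoc]
    rw [integral_const_mul, hB, add_mul, add_mul, add_mul]
    linarith

lemma RR_SP {γ : ℝ} (hγ : 0 < γ) {V₁ V₂ : ℝ → ℝ} (h1 : Decay γ V₁) (h2 : Decay γ V₂)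
    (n : ℕ) : SP n 0 0 (fun p => Ring.inverse (1 - TT hγ V₁ V₂ p)) := by
  obtain ⟨C, hC⟩ := TT_unit hγ h1 h2
  exact SP.inverse (R := EE →L[ℝ] EE) (T := TT hγ V₁ V₂)
    (fun n => SP.weak (F := EE →L[ℝ] EE) (m' := 0) (w' := 0) (TT_SP hγ h1 h2 n)
      (by norm_num) hγ.le)
    (fun p => (hC p).1) ⟨C, fun p => (hC p).2⟩ n

end

def ee : EE := BoundedContinuousFunction.const ℝ ((0 : ℂ), (1 : ℂ))

def hh {γ : ℝ} (hγ : 0 < γ) (V₁ V₂ : ℝ → ℝ) (p : ℝ × ℝ) : EE :=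
  Ring.inverse (1 - TT hγ V₁ V₂ p) ee

def gg {γ : ℝ} (hγ : 0 < γ) (V₁ V₂ : ℝ → ℝ) (p : ℝ × ℝ) : ℂ × ℂ := hh hγ V₁ V₂ p 0

section

lemma gg_bdd {γ : ℝ} (hγ : 0 < γ) {V₁ V₂ : ℝ → ℝ} (h1 : Decay γ V₁) (h2 : Decay γ V₂)
    : ∃ C, 0 ≤ C ∧ ∀ p, ‖gg hγ V₁ V₂ p‖ ≤ C := by
  obtain ⟨C, hC⟩ := TT_unit hγ h1 h2
  have hC0 : 0 ≤ C := (norm_nonneg (Ring.inverse (1 - TT hγ V₁ V₂ 0))).trans (hC 0).2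
  refine ⟨C * ‖ee‖, by positivity, fun p => ?_⟩
  refine ((hh hγ V₁ V₂ p).norm_coe_le_norm 0).trans ?_
  refine (ContinuousLinearMap.le_opNorm _ _).trans ?_
  gcongr
  exact (hC p).2

lemma gg_sub_SP {γ : ℝ} (hγ : 0 < γ) {V₁ V₂ : ℝ → ℝ} (h1 : Decay γ V₁) (h2 : Decay γ V₂)
    (n : ℕ) :
    SP n (-1) γ (fun p => gg hγ V₁ V₂ p - ((0 : ℂ), (1 : ℂ))) := by
  obtain ⟨C, hC⟩ := TT_unit hγ h1 h2
  have e := SP.mul (R := EE →L[ℝ] EE) (RR_SP hγ h1 h2 n) (TT_SP hγ h1 h2 n)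
  rw [zero_add, zero_add] at e
  have e2 : SP n (-1) γ (fun p => Ring.inverse (1 - TT hγ V₁ V₂ p) * TT hγ V₁ V₂ p) := e
  have e3 := SP.clm (F := EE →L[ℝ] EE) (G := EE) e2 (ContinuousLinearMap.apply ℝ EE ee)
  have e4 := SP.clm (F := EE) (G := ℂ × ℂ) e3 (BoundedContinuousFunction.evalCLM ℝ (0 : ℝ))
  have : (fun p => gg hγ V₁ V₂ p - ((0 : ℂ), (1 : ℂ))) = fun p =>
      (BoundedContinuousFunction.evalCLM ℝ (0 : ℝ)) ((ContinuousLinearMap.apply ℝ EE ee)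
        (Ring.inverse (1 - TT hγ V₁ V₂ p) * TT hγ V₁ V₂ p)) := by
    ext1 p
    have hR : Ring.inverse (1 - TT hγ V₁ V₂ p) * TT hγ V₁ V₂ p =
        Ring.inverse (1 - TT hγ V₁ V₂ p) - 1 :=
      ring_inv_aux (A := EE →L[ℝ] EE) _ (hC p).1
    rw [hR]
    rfl
  rw [this]
  exact e4

lemma gg_contDiff {γ : ℝ} (hγ : 0 < γ) {V₁ V₂ : ℝ → ℝ} (h1 : Decay γ V₁) (h2 : Decay γ V₂)
    : ContDiff ℝ (⊤ : ℕ∞) (gg hγ V₁ V₂) := by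
  have := (SP.contDiff_top (gg_sub_SP hγ h1 h2)).add
    (contDiff_const (c := ((0 : ℂ), (1 : ℂ))))
  simpa using this

lemma hh_eq {γ : ℝ} (hγ : 0 < γ) {V₁ V₂ : ℝ → ℝ} (h1 : Decay γ V₁) (h2 : Decay γ V₂)
    (p : ℝ × ℝ) : hh hγ V₁ V₂ p = ee + TT hγ V₁ V₂ p (hh hγ V₁ V₂ p) := by
  obtain ⟨C, hC⟩ := TT_unit hγ h1 h2
  have := Ring.mul_inverse_cancel _ (hC p).1
  have := congrArg (fun L : EE →L[ℝ] EE => L ee) this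
  have e : hh hγ V₁ V₂ p - TT hγ V₁ V₂ p (hh hγ V₁ V₂ p) = ee := this
  rw [← e]; abel

lemma hh_unique {γ : ℝ} (hγ : 0 < γ) {V₁ V₂ : ℝ → ℝ} (h1 : Decay γ V₁) (h2 : Decay γ V₂)
    (p : ℝ × ℝ) (h : EE) (heq : h = ee + TT hγ V₁ V₂ p h) : h = hh hγ V₁ V₂ p := by
  obtain ⟨C, hC⟩ := TT_unit hγ h1 h2
  have := Ring.inverse_mul_cancel _ (hC p).1
  have h3 : Ring.inverse (1 - TT hγ V₁ V₂ p) ((1 - TT hγ V₁ V₂ p) h) = h :=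
    congrArg (fun L : EE →L[ℝ] EE => L h) this
  have h4 : (1 - TT hγ V₁ V₂ p) h = ee := by
    change h - TT hγ V₁ V₂ p h = ee
    nth_rw 1 [heq]; abel
  rw [h4] at h3
  exact h3.symm

lemma TT_apply {γ : ℝ} (hγ : 0 < γ) {V₁ V₂ : ℝ → ℝ} (h1 : Decay γ V₁) (h2 : Decay γ V₂)
    (p : ℝ × ℝ) (h : EE) (x : ℝ) : TT hγ V₁ V₂ p h x =
    (∫ t in Set.Ioi (0:ℝ), (K1 t p.2 * V₁ (p.1 + (|x| + t))) • A11 (h (|x| + t))) +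
    (∫ t in Set.Ioi (0:ℝ), (K1 t p.2 * V₂ (p.1 + (|x| + t))) • A12 (h (|x| + t))) +
    (∫ t in Set.Ioi (0:ℝ), (K2 t p.2 * V₁ (p.1 + (|x| + t))) • A21 (h (|x| + t))) +
    (∫ t in Set.Ioi (0:ℝ), (K2 t p.2 * V₂ (p.1 + (|x| + t))) • A22 (h (|x| + t))) := by
  rw [← Tij_apply hγ K1_QP h1, ← Tij_apply hγ K1_QP h2, ← Tij_apply hγ K2_QP h1,
    ← Tij_apply hγ K2_QP h2]
  rfl

lemma hh_shift {γ : ℝ} (hγ : 0 < γ) {V₁ V₂ : ℝ → ℝ} (h1 : Decay γ V₁) (h2 : Decay γ V₂)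
    (s l x : ℝ) (hx : 0 ≤ x) : hh hγ V₁ V₂ (s, l) x = gg hγ V₁ V₂ (s + x, l) := by
  let τ : EE := (hh hγ V₁ V₂ (s, l)).compContinuous ⟨fun y : ℝ => x + |y|, by fun_prop⟩
  have hτ : ∀ y, τ y = hh hγ V₁ V₂ (s, l) (x + |y|) := fun y => rfl
  have : τ = hh hγ V₁ V₂ (s + x, l) := by
    refine hh_unique hγ h1 h2 _ _ ?_
    ext1 y
    rw [hτ, hh_eq hγ h1 h2]
    change ee _ + TT hγ V₁ V₂ (s, l) (hh hγ V₁ V₂ (s, l)) _ = ee y + TT hγ V₁ V₂ (s + x, l) τ y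
    have e : ee (x + |y|) = ee y := rfl
    rw [e]
    congr 1
    rw [TT_apply hγ h1 h2, TT_apply hγ h1 h2]
    have ha : |(x + |y|)| = x + |y| := abs_of_nonneg (by positivity)
    have key : ∀ (K : ℝ → ℝ → ℝ) (V : ℝ → ℝ) (A : ℂ × ℂ →L[ℝ] ℂ × ℂ),
      (∫ t in Set.Ioi (0:ℝ), (K t l * V (s + (|(x + |y|)| + t))) •
        A (hh hγ V₁ V₂ (s, l) (|(x + |y|)| + t))) =
      ∫ t in Set.Ioi (0:ℝ), (K t l * V (s + x + (|y| + t))) • A (τ (|y| + t)) := by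
      intro K V A
      refine setIntegral_congr_fun measurableSet_Ioi fun t ht => ?_
      have ht : 0 < t := ht
      have hb : |(|y| + t)| = |y| + t := abs_of_nonneg (by positivity)
      simp only [hτ, ha, hb]
      rw [show x + |y| + t = x + (|y| + t) by ring, show s + (x + (|y| + t)) = s + x + (|y| + t) by ring]
    simp only [key]
  have h0 := congrArg (fun h : EE => h 0) this
  simp only [hτ, abs_zero, add_zero] at h0
  exact h0

lemma gg_eq {γ : ℝ} (hγ : 0 < γ) {V₁ V₂ : ℝ → ℝ} (h1 : Decay γ V₁) (h2 : Decay γ V₂)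
    (s l : ℝ) : gg hγ V₁ V₂ (s, l) = ((0 : ℂ), (1 : ℂ)) + (
    (∫ t in Set.Ioi (0:ℝ), (K1 t l * V₁ (s + t)) • A11 (gg hγ V₁ V₂ (s + t, l))) +
    (∫ t in Set.Ioi (0:ℝ), (K1 t l * V₂ (s + t)) • A12 (gg hγ V₁ V₂ (s + t, l))) +
    (∫ t in Set.Ioi (0:ℝ), (K2 t l * V₁ (s + t)) • A21 (gg hγ V₁ V₂ (s + t, l))) +
    (∫ t in Set.Ioi (0:ℝ), (K2 t l * V₂ (s + t)) • A22 (gg hγ V₁ V₂ (s + t, l)))) := by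
  have h := hh_eq hγ h1 h2 (s, l)
  have h0 : gg hγ V₁ V₂ (s, l) = ee 0 + TT hγ V₁ V₂ (s, l) (hh hγ V₁ V₂ (s, l)) 0 :=
    congrArg (fun h : EE => h 0) h
  rw [h0, TT_apply hγ h1 h2]
  have e : ee 0 = ((0 : ℂ), (1 : ℂ)) := rfl
  rw [e]
  have key : ∀ (K : ℝ → ℝ → ℝ) (V : ℝ → ℝ) (A : ℂ × ℂ →L[ℝ] ℂ × ℂ),
      (∫ t in Set.Ioi (0:ℝ), (K t l * V (s + (|(0:ℝ)| + t))) •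
        A (hh hγ V₁ V₂ (s, l) (|(0:ℝ)| + t))) =
      ∫ t in Set.Ioi (0:ℝ), (K t l * V (s + t)) • A (gg hγ V₁ V₂ (s + t, l)) := by
    intro K V A
    refine setIntegral_congr_fun measurableSet_Ioi fun t ht => ?_
    have ht : 0 < t := ht
    simp only [abs_zero, zero_add]
    rw [hh_shift hγ h1 h2 s l t ht.le]
  simp only [key]

end

open Real MeasureTheory Filter Topology
open scoped BoundedContinuousFunction

section ODE
variable {E : Type*} [NormedAddCommGroup E] [NormedSpace ℝ E] [CompleteSpace E]

lemma tail_deriv {P : ℝ → E} (hc : Continuous P) (hi : ∀ x, IntegrableOn P (Set.Ioi x)) (x : ℝ) :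
    HasDerivAt (fun x => ∫ y in Set.Ioi x, P y) (-P x) x := by
  have e : (fun x => ∫ y in Set.Ioi x, P y) = fun x => (∫ y in Set.Ioi (0:ℝ), P y) -
      ∫ y in (0:ℝ)..x, P y := by
    ext1 x
    rw [← intervalIntegral.integral_Ioi_sub_Ioi' (hi 0) (hi x)]
    abel
  rw [e]
  exact (intervalIntegral.integral_hasDerivAt_right (hc.intervalIntegrable _ _)
    (hc.stronglyMeasurableAtFilter _ _) hc.continuousAt).const_sub _

lemma ode_term {a a1 b b1 : ℝ → ℝ} {ρ : ℝ} (ha : ∀ x, HasDerivAt a (a1 x) x)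
    (ha1 : ∀ x, HasDerivAt a1 (ρ * a x) x) (hb : ∀ x, HasDerivAt b (b1 x) x)
    (hb1 : ∀ x, HasDerivAt b1 (ρ * b x) x) (hW : ∀ x, b x * a1 x - b1 x * a x = 1)
    {P : ℝ → E} (hc : Continuous P) (hia : ∀ x, IntegrableOn (fun y => a y • P y) (Set.Ioi x))
    (hib : ∀ x, IntegrableOn (fun y => b y • P y) (Set.Ioi x)) :
    ∃ F' : ℝ → E, (∀ x, HasDerivAt (fun x => b x • (∫ y in Set.Ioi x, a y • P y) -
        a x • ∫ y in Set.Ioi x, b y • P y) (F' x) x) ∧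
      ∀ x, HasDerivAt F' (ρ • (b x • (∫ y in Set.Ioi x, a y • P y) -
        a x • ∫ y in Set.Ioi x, b y • P y) + P x) x := by
  have hac : Continuous a := continuous_iff_continuousAt.2 fun x => (ha x).continuousAt
  have hbc : Continuous b := continuous_iff_continuousAt.2 fun x => (hb x).continuousAt
  have dA := tail_deriv (P := fun y => a y • P y) (hac.smul hc) hia
  have dB := tail_deriv (P := fun y => b y • P y) (hbc.smul hc) hib
  refine ⟨fun x => b1 x • (∫ y in Set.Ioi x, a y • P y) -
        a1 x • ∫ y in Set.Ioi x, b y • P y, fun x => ?_, fun x => ?_⟩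
  · refine (((hb x).smul (dA x)).sub ((ha x).smul (dB x))).congr_deriv ?_
    module
  · refine (((hb1 x).smul (dA x)).sub ((ha1 x).smul (dB x))).congr_deriv ?_
    have : P x = (b x * a1 x - b1 x * a x) • P x := by rw [hW, one_smul]
    generalize (∫ y in Set.Ioi x, a y • P y) = I at *
    generalize (∫ y in Set.Ioi x, b y • P y) = J at *
    calc _ = ρ • (b x • I - a x • J) + (b x * a1 x - b1 x * a x) • P x := by module
      _ = _ := by rw [← this]

lemma P_integrable {γ m : ℝ} (hγ : 0 < γ) (hm : 0 < m) {V : ℝ → ℝ} (hV : Decay γ V) {G : ℝ → E}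
    (hG : Continuous G) {C : ℝ} (hC : ∀ x, ‖G x‖ ≤ C) {a : ℝ → ℝ} (hac : Continuous a)
    (ha : ∀ x, |a x| ≤ exp (m * |x|)) (x : ℝ) :
    IntegrableOn (fun y => a y • (exp (-(m * y)) * V y) • G y) (Set.Ioi x) := by
  obtain ⟨D, hD, hV0⟩ := hV.2 0
  have hVc := hV.continuous 0
  rw [iteratedDeriv_zero] at hVc hV0
  have hC0 : 0 ≤ C := (norm_nonneg _).trans (hC 0)
  refine Integrable.mono' ((exp_neg_integrableOn_Ioi x hγ).const_mul (exp (2 * m * |x|) * D * C))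
    (Continuous.aestronglyMeasurable (by fun_prop)) ?_
  filter_upwards [ae_restrict_mem measurableSet_Ioi] with y hy
  have hy : x < y := hy
  rw [norm_smul, norm_smul, norm_mul, Real.norm_eq_abs, Real.norm_eq_abs, Real.norm_eq_abs,
    abs_of_pos (exp_pos _)]
  have h1 : m * |y| + -(m * y) ≤ 2 * m * |x| := by
    rcases abs_cases y with ⟨h, _⟩ | ⟨h, _⟩ <;> rcases abs_cases x with ⟨h', _⟩ | ⟨h', _⟩ <;>
      rw [h, h'] <;> nlinarith
  have h2 : |V y| ≤ D * exp (-γ * y) := (hV0 y).trans (by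
    have := le_abs_self y
    refine mul_le_mul_of_nonneg_left (exp_le_exp.2 ?_) hD
    nlinarith)
  calc _ ≤ exp (m * |y|) * (exp (-(m * y)) * (D * exp (-γ * y)) * C) := by
        gcongr
        · exact ha y
        · exact hC y
    _ = exp (m * |y| + -(m * y)) * (D * exp (-γ * y) * C) := by rw [exp_add]; ring
    _ ≤ exp (2 * m * |x|) * (D * exp (-γ * y) * C) := by gcongr
    _ = _ := by ring

lemma ode_full {γ m : ℝ} (hγ : 0 < γ) (hm : 0 < m) {V : ℝ → ℝ} (hV : Decay γ V) {G : ℝ → E}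
    (hG : Continuous G) {C : ℝ} (hC : ∀ x, ‖G x‖ ≤ C)
    {a a1 b b1 : ℝ → ℝ} {ρ : ℝ} (ha : ∀ x, HasDerivAt a (a1 x) x)
    (ha1 : ∀ x, HasDerivAt a1 (ρ * a x) x) (hb : ∀ x, HasDerivAt b (b1 x) x)
    (hb1 : ∀ x, HasDerivAt b1 (ρ * b x) x) (hW : ∀ x, b x * a1 x - b1 x * a x = 1)
    (hab : ∀ x, |a x| ≤ exp (m * |x|)) (hbb : ∀ x, |b x| ≤ exp (m * |x|))
    {K : ℝ → ℝ} (hK : ∀ x t, 0 ≤ t → K t = exp (-(m * t)) * (b x * a (x + t) - a x * b (x + t))) :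
    ∃ F' : ℝ → E, (∀ x, HasDerivAt (fun x => exp (-(m * x)) •
        ∫ t in Set.Ioi (0:ℝ), (K t * V (x + t)) • G (x + t)) (F' x) x) ∧
      ∀ x, HasDerivAt F' (ρ • (exp (-(m * x)) •
        ∫ t in Set.Ioi (0:ℝ), (K t * V (x + t)) • G (x + t)) +
          (exp (-(m * x)) * V x) • G x) x := by
  have hac : Continuous a := continuous_iff_continuousAt.2 fun x => (ha x).continuousAt
  have hbc : Continuous b := continuous_iff_continuousAt.2 fun x => (hb x).continuousAt
  have hVc := hV.continuous 0
  rw [iteratedDeriv_zero] at hVc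
  have hia := P_integrable hγ hm hV hG hC hac hab
  have hib := P_integrable hγ hm hV hG hC hbc hbb
  have key := ode_term ha ha1 hb hb1 hW (P := fun y => (exp (-(m * y)) * V y) • G y)
    (by fun_prop) hia hib
  have e : ∀ x, exp (-(m * x)) • (∫ t in Set.Ioi (0:ℝ), (K t * V (x + t)) • G (x + t)) =
      b x • (∫ y in Set.Ioi x, a y • (exp (-(m * y)) * V y) • G y) -
        a x • ∫ y in Set.Ioi x, b y • (exp (-(m * y)) * V y) • G y := by
    intro x
    rw [← integral_smul, ← integral_smul, ← integral_smul]
    have hs := integral_sub (f := fun y => b x • a y • (exp (-(m * y)) * V y) • G y)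
      (g := fun y => a x • b y • (exp (-(m * y)) * V y) • G y)
      ((hia x).smul (b x)) ((hib x).smul (a x))
    rw [← hs]
    have := (measurePreserving_add_left volume x).setIntegral_preimage_emb
      (MeasurableEquiv.addLeft x).measurableEmbedding
      (fun y => b x • a y • (exp (-(m * y)) * V y) • G y -
      a x • b y • (exp (-(m * y)) * V y) • G y) (Set.Ioi x)
    have hp : (fun t => x + t) ⁻¹' Set.Ioi x = Set.Ioi 0 := by ext t; simp
    rw [hp] at this
    rw [← this]
    refine setIntegral_congr_fun measurableSet_Ioi fun t ht => ?_
    have ht : 0 < t := ht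
    simp only [hK x t ht.le, mul_add, neg_add, exp_add]
    module
  simp only [e]
  exact key

end ODE

open Real MeasureTheory Filter Topology
open scoped BoundedContinuousFunction

lemma snd_int_zero (A : ℂ × ℂ →L[ℝ] ℂ × ℂ) (hA : ∀ v, (A v).2 = 0) (c : ℝ → ℝ) (v : ℝ → ℂ × ℂ)
    (s : Set ℝ) : (∫ t in s, c t • A (v t)).2 = 0 := by
  by_cases h : IntegrableOn (fun t => c t • A (v t)) s
  · rw [snd_integral h]; simp [hA]
  · rw [integral_undef h]; rfl

lemma fst_int_zero (A : ℂ × ℂ →L[ℝ] ℂ × ℂ) (hA : ∀ v, (A v).1 = 0) (c : ℝ → ℝ) (v : ℝ → ℂ × ℂ)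
    (s : Set ℝ) : (∫ t in s, c t • A (v t)).1 = 0 := by
  by_cases h : IntegrableOn (fun t => c t • A (v t)) s
  · rw [fst_integral h]; simp [hA]
  · rw [integral_undef h]; rfl

lemma cosh_le_exp_abs (z : ℝ) : cosh z ≤ exp |z| := by
  rw [cosh_eq]
  have h1 : exp z ≤ exp |z| := exp_le_exp.2 (le_abs_self z)
  have h2 : exp (-z) ≤ exp |z| := exp_le_exp.2 (neg_le_abs z)
  linarith

lemma hasDerivAt_lin (m x : ℝ) : HasDerivAt (fun x => m * x) m x := by
  simpa using (hasDerivAt_id x).const_mul m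

section

lemma ode_K1 {E : Type*} [NormedAddCommGroup E] [NormedSpace ℝ E] [CompleteSpace E]
  {γ : ℝ} (hγ : 0 < γ) {V : ℝ → ℝ} (hV : Decay γ V) {G : ℝ → E}
    (hG : Continuous G) {C : ℝ} (hC : ∀ x, ‖G x‖ ≤ C) (l : ℝ)
    : ∃ F' : ℝ → E, (∀ x, HasDerivAt (fun x => exp (-(mu l * x)) •
        ∫ t in Set.Ioi (0:ℝ), (K1 t l * V (x + t)) • G (x + t)) (F' x) x) ∧
      ∀ x, HasDerivAt F' ((-l ^ 2) • (exp (-(mu l * x)) •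
        ∫ t in Set.Ioi (0:ℝ), (K1 t l * V (x + t)) • G (x + t)) +
          (exp (-(mu l * x)) * V x) • G x) x := by
  have hm := mu_ge_one l
  have hm0 := mu_pos l
  refine ode_full hγ hm0 hV hG hC (a := Sn l) (a1 := fun x => cos (l * x))
    (b := fun x => cos (l * x)) (b1 := fun x => -sin (l * x) * l) (fun x => Sn_hasDerivAt l x)
    (fun x => ?_) (fun x => ?_) (fun x => ?_) (fun x => ?_) (fun x => ?_) (fun x => ?_)
    (K := fun t => K1 t l) (fun x t ht => ?_)
  · refine ((hasDerivAt_lin l x).cos).congr_deriv ?_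
    rw [← l_mul_Sn]; ring
  · exact (hasDerivAt_lin l x).cos
  · refine (((hasDerivAt_lin l x).sin).neg.mul_const l).congr_deriv ?_
    ring
  · have := l_mul_Sn l x
    have h2 := cos_sq_add_sin_sq (l * x)
    calc _ = cos (l * x) ^ 2 + sin (l * x) * (l * Sn l x) := by ring
      _ = 1 := by rw [this]; linarith
  · refine (Sn_le l x).trans ?_
    have h1 := add_one_le_exp (mu l * |x|)
    have := abs_nonneg x
    nlinarith
  · refine (abs_cos_le_one _).trans (one_le_exp ?_)
    positivity
  · rw [K1_eq ht, ← Sn_sub, add_sub_cancel_left]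

lemma ode_K2 {E : Type*} [NormedAddCommGroup E] [NormedSpace ℝ E] [CompleteSpace E]
  {γ : ℝ} (hγ : 0 < γ) {V : ℝ → ℝ} (hV : Decay γ V) {G : ℝ → E}
    (hG : Continuous G) {C : ℝ} (hC : ∀ x, ‖G x‖ ≤ C) (l : ℝ)
    : ∃ F' : ℝ → E, (∀ x, HasDerivAt (fun x => exp (-(mu l * x)) •
        ∫ t in Set.Ioi (0:ℝ), (K2 t l * V (x + t)) • G (x + t)) (F' x) x) ∧
      ∀ x, HasDerivAt F' ((mu l ^ 2) • (exp (-(mu l * x)) •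
        ∫ t in Set.Ioi (0:ℝ), (K2 t l * V (x + t)) • G (x + t)) +
          (exp (-(mu l * x)) * V x) • G x) x := by
  have hm := mu_ge_one l
  have hm0 := mu_pos l
  have hm1 := hm0.ne'
  refine ode_full hγ hm0 hV hG hC (a := fun x => sinh (mu l * x) / mu l)
    (a1 := fun x => cosh (mu l * x))
    (b := fun x => cosh (mu l * x)) (b1 := fun x => sinh (mu l * x) * mu l) (fun x => ?_)
    (fun x => ?_) (fun x => ?_) (fun x => ?_) (fun x => ?_) (fun x => ?_) (fun x => ?_)
    (K := fun t => K2 t l) (fun x t ht => ?_)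
  · refine (((hasDerivAt_lin (mu l) x).sinh).div_const _).congr_deriv ?_
    field_simp
  · refine ((hasDerivAt_lin (mu l) x).cosh).congr_deriv ?_
    field_simp
  · exact (hasDerivAt_lin (mu l) x).cosh
  · refine (((hasDerivAt_lin (mu l) x).sinh).mul_const _).congr_deriv ?_
    ring
  · have := cosh_sq (mu l * x)
    field_simp
    linarith
  · rw [abs_div, abs_of_pos hm0]
    refine (div_le_self (abs_nonneg _) hm).trans ?_
    have h0 := cosh_le_exp_abs (mu l * x)
    rw [abs_mul, abs_of_pos hm0] at h0
    refine le_trans ?_ h0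
    rw [abs_le]
    have h1 := exp_pos (mu l * x)
    have h2 := exp_pos (-(mu l * x))
    rw [sinh_eq, cosh_eq]
    constructor <;> linarith
  · have h0 := cosh_le_exp_abs (mu l * x)
    rw [abs_mul, abs_of_pos hm0] at h0
    rwa [abs_of_pos (cosh_pos _)]
  · rw [K2_eq ht]
    congr 1
    have := sinh_sub (mu l * (x + t)) (mu l * x)
    rw [show mu l * (x + t) - mu l * x = mu l * t by ring] at this
    rw [this]; field_simp

end

def ff {γ : ℝ} (hγ : 0 < γ) (V₁ V₂ : ℝ → ℝ) (x l : ℝ) : ℂ × ℂ :=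
  exp (-(mu l * x)) • gg hγ V₁ V₂ (x, l)

lemma mu_contDiff : ContDiff ℝ (⊤ : ℕ∞) mu := by
  unfold mu
  exact ContDiff.sqrt (by fun_prop) fun x => by positivity

lemma iter2 {u u1 : ℝ → ℂ} {z : ℂ} {x : ℝ} (h : ∀ x, HasDerivAt u (u1 x) x)
    (h1 : HasDerivAt u1 z x) : iteratedDeriv 2 u x = z := by
  have e : deriv u = u1 := funext fun x => (h x).deriv
  rw [iteratedDeriv_succ', iteratedDeriv_one, e, h1.deriv]

section

lemma ff_contDiff {γ : ℝ} (hγ : 0 < γ) {V₁ V₂ : ℝ → ℝ} (h1 : Decay γ V₁) (h2 : Decay γ V₂)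
    : ContDiff ℝ (⊤ : ℕ∞) (fun p : ℝ × ℝ => ff hγ V₁ V₂ p.1 p.2) := by
  unfold ff
  have := mu_contDiff
  have := gg_contDiff hγ h1 h2
  fun_prop

lemma ff_solution {γ : ℝ} (hγ : 0 < γ) {V₁ V₂ : ℝ → ℝ} (h1 : Decay γ V₁) (h2 : Decay γ V₂)
    (l : ℝ) : IsSolution V₁ V₂ (((l ^ 2 + 1 : ℝ) : ℂ)) (fun x => ff hγ V₁ V₂ x l) := by
  constructor
  · have h := ff_contDiff hγ h1 h2
    have h' : ContDiff ℝ 2 (fun p : ℝ × ℝ => ff hγ V₁ V₂ p.1 p.2) :=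
      contDiff_infty.1 h 2
    exact h'.comp (contDiff_id.prodMk contDiff_const)
  obtain ⟨C, hC, hb⟩ := gg_bdd hγ h1 h2
  have hgc : Continuous fun x => gg hγ V₁ V₂ (x, l) :=
    (gg_contDiff hγ h1 h2).continuous.comp (by fun_prop)
  have hGc : ∀ A : ℂ × ℂ →L[ℝ] ℂ × ℂ, Continuous fun x => A (gg hγ V₁ V₂ (x, l)) := fun A =>
    A.continuous.comp hgc
  have hGb : ∀ (A : ℂ × ℂ →L[ℝ] ℂ × ℂ) x, ‖A (gg hγ V₁ V₂ (x, l))‖ ≤ ‖A‖ * C := fun A x =>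
    (A.le_opNorm _).trans (mul_le_mul_of_nonneg_left (hb _) (norm_nonneg _))
  obtain ⟨F1, d1, dd1⟩ := ode_K1 hγ h1 (hGc A11) (hGb A11) l
  obtain ⟨F2, d2, dd2⟩ := ode_K1 hγ h2 (hGc A12) (hGb A12) l
  obtain ⟨F3, d3, dd3⟩ := ode_K2 hγ h1 (hGc A21) (hGb A21) l
  obtain ⟨F4, d4, dd4⟩ := ode_K2 hγ h2 (hGc A22) (hGb A22) l
  have hg := fun x => gg_eq hγ h1 h2 x l
  have z1 := fun x => snd_int_zero A11 (fun _ => rfl) (fun t => K1 t l * V₁ (x + t))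
    (fun t => gg hγ V₁ V₂ (x + t, l)) (Set.Ioi 0)
  have z2 := fun x => snd_int_zero A12 (fun _ => rfl) (fun t => K1 t l * V₂ (x + t))
    (fun t => gg hγ V₁ V₂ (x + t, l)) (Set.Ioi 0)
  have z3 := fun x => fst_int_zero A21 (fun _ => rfl) (fun t => K2 t l * V₁ (x + t))
    (fun t => gg hγ V₁ V₂ (x + t, l)) (Set.Ioi 0)
  have z4 := fun x => fst_int_zero A22 (fun _ => rfl) (fun t => K2 t l * V₂ (x + t))
    (fun t => gg hγ V₁ V₂ (x + t, l)) (Set.Ioi 0)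
  set I1 : ℝ → ℂ × ℂ := fun x =>
    ∫ t in Set.Ioi (0:ℝ), (K1 t l * V₁ (x + t)) • A11 (gg hγ V₁ V₂ (x + t, l)) with hI1
  set I2 : ℝ → ℂ × ℂ := fun x =>
    ∫ t in Set.Ioi (0:ℝ), (K1 t l * V₂ (x + t)) • A12 (gg hγ V₁ V₂ (x + t, l)) with hI2
  set I3 : ℝ → ℂ × ℂ := fun x =>
    ∫ t in Set.Ioi (0:ℝ), (K2 t l * V₁ (x + t)) • A21 (gg hγ V₁ V₂ (x + t, l)) with hI3
  set I4 : ℝ → ℂ × ℂ := fun x =>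
    ∫ t in Set.Ioi (0:ℝ), (K2 t l * V₂ (x + t)) • A22 (gg hγ V₁ V₂ (x + t, l)) with hI4
  have hg' : ∀ x, gg hγ V₁ V₂ (x, l) = ((0 : ℂ), (1 : ℂ)) + (I1 x + I2 x + I3 x + I4 x) := hg
  replace z1 : ∀ x, (I1 x).2 = 0 := z1
  replace z2 : ∀ x, (I2 x).2 = 0 := z2
  replace z3 : ∀ x, (I3 x).1 = 0 := z3
  replace z4 : ∀ x, (I4 x).1 = 0 := z4
  replace d1 : ∀ x, HasDerivAt (fun x => exp (-(mu l * x)) • I1 x) (F1 x) x := d1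
  replace dd1 : ∀ x, HasDerivAt F1 ((-l ^ 2) • (exp (-(mu l * x)) • I1 x) +
      (exp (-(mu l * x)) * V₁ x) • A11 (gg hγ V₁ V₂ (x, l))) x := dd1
  replace d2 : ∀ x, HasDerivAt (fun x => exp (-(mu l * x)) • I2 x) (F2 x) x := d2
  replace dd2 : ∀ x, HasDerivAt F2 ((-l ^ 2) • (exp (-(mu l * x)) • I2 x) +
      (exp (-(mu l * x)) * V₂ x) • A12 (gg hγ V₁ V₂ (x, l))) x := dd2
  replace d3 : ∀ x, HasDerivAt (fun x => exp (-(mu l * x)) • I3 x) (F3 x) x := d3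
  replace dd3 : ∀ x, HasDerivAt F3 ((mu l ^ 2) • (exp (-(mu l * x)) • I3 x) +
      (exp (-(mu l * x)) * V₁ x) • A21 (gg hγ V₁ V₂ (x, l))) x := dd3
  replace d4 : ∀ x, HasDerivAt (fun x => exp (-(mu l * x)) • I4 x) (F4 x) x := d4
  replace dd4 : ∀ x, HasDerivAt F4 ((mu l ^ 2) • (exp (-(mu l * x)) • I4 x) +
      (exp (-(mu l * x)) * V₂ x) • A22 (gg hγ V₁ V₂ (x, l))) x := dd4
  clear_value I1 I2 I3 I4
  have hff : (fun x => ff hγ V₁ V₂ x l) = fun x => exp (-(mu l * x)) • ((0 : ℂ), (1 : ℂ)) +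
      (exp (-(mu l * x)) • I1 x + exp (-(mu l * x)) • I2 x + exp (-(mu l * x)) • I3 x +
        exp (-(mu l * x)) • I4 x) := by
    ext1 x
    unfold ff
    rw [hg' x]; module
  have d0 : ∀ x, HasDerivAt (fun x => exp (-(mu l * x))) (exp (-(mu l * x)) * -mu l) x := fun x =>
    ((hasDerivAt_lin (mu l) x).neg).exp
  have D1 : ∀ x, HasDerivAt (fun x => ff hγ V₁ V₂ x l)
      ((exp (-(mu l * x)) * -mu l) • ((0 : ℂ), (1 : ℂ)) + (F1 x + F2 x + F3 x + F4 x)) x := by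
    intro x
    rw [hff]
    exact ((d0 x).smul_const _).add ((((d1 x).add (d2 x)).add (d3 x)).add (d4 x))
  have D2 := fun x => (((d0 x).mul_const (-mu l)).smul_const ((0 : ℂ), (1 : ℂ))).add
    ((((dd1 x).add (dd2 x)).add (dd3 x)).add (dd4 x))
  intro x
  have e1 := iter2 (x := x)
    (fun x => (ContinuousLinearMap.fst ℝ ℂ ℂ).hasFDerivAt.comp_hasDerivAt x (D1 x))
    ((ContinuousLinearMap.fst ℝ ℂ ℂ).hasFDerivAt.comp_hasDerivAt x (D2 x))
  have e2 := iter2 (x := x)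
    (fun x => (ContinuousLinearMap.snd ℝ ℂ ℂ).hasFDerivAt.comp_hasDerivAt x (D1 x))
    ((ContinuousLinearMap.snd ℝ ℂ ℂ).hasFDerivAt.comp_hasDerivAt x (D2 x))
  simp only [Function.comp_def, ContinuousLinearMap.coe_fst', ContinuousLinearMap.coe_snd'] at e1 e2
  unfold matH
  rw [e1, e2]
  have hm := mu_sq l
  have hx := hg' x
  have c1 : (gg hγ V₁ V₂ (x, l)).1 = (I1 x).1 + (I2 x).1 := by rw [hx]; simp [z3, z4]
  have c2 : (gg hγ V₁ V₂ (x, l)).2 = 1 + ((I3 x).2 + (I4 x).2) := by rw [hx]; simp [z1, z2]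
  have hmc : (mu l : ℂ) ^ 2 = (l : ℂ) ^ 2 + 2 := by exact_mod_cast hm
  unfold ff
  ext1
  · simp [A11, A12, A21, A22, z3, z4, c1, c2]
    ring
  · simp [A11, A12, A21, A22, z1, z2, c1, c2]
    linear_combination Complex.exp (-((mu l : ℂ) * (x : ℂ))) * (1 + ((I3 x).2 + (I4 x).2)) * hmc

end

lemma decay_of {γ : ℝ} {V₁ V₂ : ℝ → ℝ} (hV : PotentialHyp γ V₁ V₂) :
    Decay γ V₁ ∧ Decay γ V₂ := by
  obtain ⟨h0, h1, s1, s2, -, -, hd⟩ := hV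
  have : ∀ k : ℕ, ∃ C : ℝ, 0 ≤ C ∧ ∀ x : ℝ,
      |iteratedDeriv k V₁ x| + |iteratedDeriv k V₂ x| ≤ C * Real.exp (-γ * |x|) := by
    intro k
    obtain ⟨C, hC⟩ := hd k
    refine ⟨C, ?_, hC⟩
    have := hC 0
    simp only [abs_zero, mul_zero, exp_zero, mul_one] at this
    exact (by positivity : (0:ℝ) ≤ |iteratedDeriv k V₁ 0| + |iteratedDeriv k V₂ 0|).trans this
  refine ⟨⟨s1, fun k => ?_⟩, ⟨s2, fun k => ?_⟩⟩ <;> obtain ⟨C, hC0, hC⟩ := this k <;>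
    refine ⟨C, hC0, fun x => le_trans ?_ (hC x)⟩
  · exact le_add_of_nonneg_right (abs_nonneg _)
  · exact le_add_of_nonneg_left (abs_nonneg _)

theorem stmt_4 (γ : ℝ) (V₁ V₂ : ℝ → ℝ) (hV : PotentialHyp γ V₁ V₂) :
    ∃ f₃ : ℝ → ℝ → ℂ × ℂ,
      ContDiff ℝ (⊤ : ℕ∞) (fun p : ℝ × ℝ => f₃ p.1 p.2) ∧
      (∀ lam : ℝ, IsSolution V₁ V₂ (((lam ^ 2 + 1 : ℝ) : ℂ)) (fun x => f₃ x lam)) ∧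
      (∃ C : ℝ, ∀ lam x : ℝ,
        ‖Real.exp (mu lam * x) • f₃ x lam‖ ≤ C) ∧
      (∀ k l : ℕ, ∃ C : ℝ, ∀ lam : ℝ, ∀ x : ℝ, 0 ≤ x →
        ‖iteratedDeriv l
            (fun m => iteratedDeriv k
              (fun y => Real.exp (mu m * y) • f₃ y m - ((0 : ℂ), (1 : ℂ))) x) lam‖
          ≤ C * mu lam ^ (-(1 : ℝ) - (l : ℝ)) * Real.exp (-γ * x)) := by
  obtain ⟨h1, h2⟩ := decay_of hV
  have hγ := hV.1
  have e : ∀ m y, Real.exp (mu m * y) • ff hγ V₁ V₂ y m = gg hγ V₁ V₂ (y, m) := by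
    intro m y
    unfold ff
    rw [smul_smul, ← exp_add, add_neg_cancel, exp_zero, one_smul]
  refine ⟨ff hγ V₁ V₂, ff_contDiff hγ h1 h2, ff_solution hγ h1 h2, ?_, fun k l => ?_⟩
  · obtain ⟨C, -, hC⟩ := gg_bdd hγ h1 h2
    exact ⟨C, fun lam x => by rw [e]; exact hC _⟩
  · simp only [e]
    exact SP.final (gg_sub_SP hγ h1 h2) k l
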